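/- Let X be a locally connected continuum contained in the Euclidean plane ℝ². Then the properties wLFPP, LFPP, wLPPP and LPPP for X are mutually equivalent. -/

import Mathlib

/-- A space has the fixed point property: every continuous self-map has a fixed point. -/
def HasFPP (Y : Type*) [TopologicalSpace Y] : Prop :=
  ∀ f : Y → Y, Continuous f → ∃ x, f x = x

/-- A space has the periodic point property: every continuous self-map has a periodic point. -/
def HasPPP (Y : Type*) [TopologicalSpace Y] : Prop :=
  ∀ f : Y → Y, Continuous f → ∃ x, ∃ n : ℕ, 1 ≤ n ∧ f^[n] x = x

/-- Local fixed point property: there is an open basis whose members have closures with FPP. -/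
def HasLFPP (Y : Type*) [TopologicalSpace Y] : Prop :=
  ∃ 𝓑 : Set (Set Y), TopologicalSpace.IsTopologicalBasis 𝓑 ∧
    ∀ B ∈ 𝓑, HasFPP ↥(closure B)

/-- Weak local fixed point property. -/
def HasWLFPP (Y : Type*) [TopologicalSpace Y] : Prop :=
  ∃ 𝓑 : Set (Set Y), TopologicalSpace.IsTopologicalBasis 𝓑 ∧
    ∀ B ∈ 𝓑, ∀ f : Y → Y, Continuous f → f '' closure B ⊆ B → ∃ x ∈ B, f x = x

/-- Local periodic point property. -/
def HasLPPP (Y : Type*) [TopologicalSpace Y] : Prop :=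
  ∃ 𝓑 : Set (Set Y), TopologicalSpace.IsTopologicalBasis 𝓑 ∧
    ∀ B ∈ 𝓑, HasPPP ↥(closure B)

/-- Weak local periodic point property. -/
def HasWLPPP (Y : Type*) [TopologicalSpace Y] : Prop :=
  ∃ 𝓑 : Set (Set Y), TopologicalSpace.IsTopologicalBasis 𝓑 ∧
    ∀ B ∈ 𝓑, ∀ f : Y → Y, Continuous f → f '' closure B ⊆ B →
      ∃ x ∈ B, ∃ n : ℕ, 1 ≤ n ∧ f^[n] x = x

/-- A subset is a simple closed curve if it is homeomorphic to the unit circle. -/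
def IsSimpleClosedCurve {α : Type*} [TopologicalSpace α] (S : Set α) : Prop :=
  Nonempty (↥S ≃ₜ ↥(Metric.sphere (0 : EuclideanSpace ℝ (Fin 2)) 1))

/-- Covering dimension at most `n`: every finite open cover admits an open shrinking
of order at most `n + 1`. -/
def CoveringDimLE (Y : Type*) [TopologicalSpace Y] (n : ℕ) : Prop :=
  ∀ (ι : Type) [Finite ι] (U : ι → Set Y), (∀ i, IsOpen (U i)) → (⋃ i, U i) = Set.univ →
    ∃ V : ι → Set Y, (∀ i, IsOpen (V i)) ∧ (∀ i, V i ⊆ U i) ∧ (⋃ i, V i) = Set.univ ∧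
      ∀ y : Y, {i | y ∈ V i}.ncard ≤ n + 1

/-- A dendrite: a locally connected (metric) continuum containing no simple closed curve. -/
def IsDendrite {α : Type*} [TopologicalSpace α] (D : Set α) : Prop :=
  IsCompact D ∧ IsConnected D ∧ LocallyConnectedSpace ↥D ∧ ∀ S ⊆ D, ¬ IsSimpleClosedCurve S

/-- A local dendrite: every point has a closed neighborhood which is a dendrite. -/
def IsLocalDendrite (Y : Type*) [TopologicalSpace Y] : Prop :=
  ∀ y : Y, ∃ N : Set Y, N ∈ nhds y ∧ IsClosed N ∧ IsDendrite N



namespace LFP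
open Complex Set

/-- Uniqueness of continuous logarithms on a preconnected set. -/
lemma log_unique {A : Type*} [TopologicalSpace A] {s : Set A} (hs : IsPreconnected s)
    {F G : A → ℂ} (hF : ContinuousOn F s) (hG : ContinuousOn G s)
    (he : ∀ x ∈ s, exp (F x) = exp (G x)) {a : A} (ha : a ∈ s) (hFG : F a = G a) :
    ∀ x ∈ s, F x = G x := by
  have := Complex.isCoveringMap_exp.eqOn_of_comp_eqOn hs hF hG
    (fun x hx => Subtype.ext (he x hx)) ha hFG
  exact this

lemma re_pos_ne {x : ℂ} (hx : 0 < x.re) : x ≠ 0 := by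
  rintro rfl; simp at hx

lemma log_mul_of_re_pos {x y : ℂ} (hx : 0 < x.re) (hy : 0 < y.re) :
    log (x * y) = log x + log y := by
  apply Complex.log_mul (re_pos_ne hx) (re_pos_ne hy)
  have h1 := abs_lt.1 (Complex.abs_arg_lt_pi_div_two_iff.2 (Or.inl hx))
  have h2 := abs_lt.1 (Complex.abs_arg_lt_pi_div_two_iff.2 (Or.inl hy))
  constructor <;> linarith

lemma log_div_of_re_pos {x y : ℂ} (hx : 0 < x.re) (hy : 0 < y.re) :
    log (y / x) = log y - log x := by
  have hxi : 0 < (x⁻¹).re := by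
    rw [Complex.inv_re]
    exact div_pos hx (Complex.normSq_pos.2 (re_pos_ne hx))
  rw [div_eq_mul_inv, log_mul_of_re_pos hy hxi, Complex.log_inv]
  · ring
  · have h1 := abs_lt.1 (Complex.abs_arg_lt_pi_div_two_iff.2 (Or.inl hx))
    intro h; linarith [Real.pi_pos]

lemma log_sum4 {a b c d : ℂ} (t : ℂ) (ha : 0 < (a * t).re) (hb : 0 < (b * t).re)
    (hc : 0 < (c * t).re) (hd : 0 < (d * t).re) :
    log (b / a) + log (c / b) - log (c / d) - log (d / a) = 0 := by
  have ht : t ≠ 0 := by rintro rfl; simp at ha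
  have key : ∀ x y : ℂ, 0 < (x * t).re → 0 < (y * t).re →
      log (y / x) = log (y * t) - log (x * t) := by
    intro x y hx hy
    rw [← log_div_of_re_pos hx hy, mul_div_mul_right _ _ ht]
  rw [key a b ha hb, key b c hb hc, key d c hd hc, key a d ha hd]; ring

lemma re_pos_of_near {x y : ℂ} (h : ‖x - y‖ < ‖y‖) : 0 < (x / y).re := by
  have hy : y ≠ 0 := by
    rintro rfl
    simp at h
    exact absurd h (not_lt.2 (norm_nonneg _))
  have h1 : ‖x / y - 1‖ < 1 := by
    have : x / y - 1 = (x - y) / y := by field_simp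
    rw [this, norm_div, div_lt_one (norm_pos_iff.2 hy)]; exact h
  have h2 := (abs_lt.1 ((Complex.abs_re_le_norm (x / y - 1)).trans_lt h1)).1
  simp at h2; linarith

lemma slit_of_re_pos {x : ℂ} (hx : 0 < x.re) : x ∈ slitPlane :=
  Complex.mem_slitPlane_iff.2 (Or.inl hx)

lemma ratio_mem_slitPlane {a b x : ℂ} (h : x ∉ segment ℝ a b) : (x - b) / (x - a) ∈ slitPlane := by
  by_contra hn
  rw [Complex.mem_slitPlane_iff] at hn
  push Not at hn
  obtain ⟨h1, h2⟩ := hn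
  have hxa : x - a ≠ 0 := by
    intro h0; apply h; rw [sub_eq_zero.1 h0]; exact left_mem_segment _ _ _
  set r : ℝ := -((x - b) / (x - a)).re with hr
  have hr0 : 0 ≤ r := by linarith
  have e1 : (x - b) / (x - a) = ((-r : ℝ) : ℂ) := by
    apply Complex.ext <;> simp [hr, h2]
  rw [div_eq_iff hxa] at e1
  apply h
  refine ⟨r / (1 + r), 1 / (1 + r), by positivity, by positivity, by field_simp; ring, ?_⟩
  have h3 : (1 + r : ℂ) ≠ 0 := by
    have : (1 + r : ℝ) ≠ 0 := by positivity
    exact_mod_cast this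
  simp only [Complex.real_smul]
  push_cast at e1 ⊢
  field_simp
  linear_combination (-1 : ℂ) * e1

/-- For `z` outside of a compact set with connected complement, `y - z` has a logarithm. -/
lemma exists_log {Y : Set ℂ} (hY : IsCompact Y) (hYc : IsPreconnected Yᶜ) (z : ℂ) (hz : z ∉ Y) :
    ∃ L : ℂ → ℂ, ContinuousOn L Y ∧ ∀ y ∈ Y, exp (L y) = y - z := by
  let P : ℂ → Prop := fun z => ∃ L : ℂ → ℂ, ContinuousOn L Y ∧ ∀ y ∈ Y, exp (L y) = y - z
  have step : ∀ z z' : ℂ, (∀ y ∈ Y, ‖z - z'‖ < ‖y - z‖) → P z → P z' := by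
    rintro z z' hzz ⟨L, hL, hLe⟩
    have hpos : ∀ y ∈ Y, 0 < ((y - z') / (y - z)).re := by
      intro y hy
      apply re_pos_of_near
      have := hzz y hy
      convert this using 2; ring
    have hne : ∀ y ∈ Y, y - z ≠ 0 := by
      intro y hy h0
      have := hzz y hy
      rw [h0, norm_zero] at this
      exact absurd this (not_lt.2 (norm_nonneg _))
    refine ⟨fun y => L y + log ((y - z') / (y - z)), ?_, ?_⟩
    · apply hL.add
      apply ContinuousOn.clog
      · apply ContinuousOn.div (by fun_prop) (by fun_prop) hne
      · intro y hy; exact slit_of_re_pos (hpos y hy)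
    · intro y hy
      rw [Complex.exp_add, hLe y hy, Complex.exp_log (re_pos_ne (hpos y hy))]
      have := hne y hy
      field_simp
  -- a far point
  obtain ⟨R, hR⟩ := hY.isBounded.exists_norm_le
  set z0 : ℂ := ((|R| + 1 : ℝ) : ℂ) with hz0
  have hre : ∀ y ∈ Y, 0 < (-(y - z0)).re := by
    intro y hy
    have h1 := (abs_le.1 ((Complex.abs_re_le_norm y).trans (hR y hy))).2
    have h2 := le_abs_self R
    simp [hz0]
    linarith
  have hz0Y : z0 ∈ Yᶜ := by
    intro h
    have := hre z0 h
    simp at this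
  have hP0 : P z0 := by
    refine ⟨fun y => log (-(y - z0)) + Real.pi * I, ?_, ?_⟩
    · apply ContinuousOn.add _ continuousOn_const
      apply ContinuousOn.clog (by fun_prop)
      intro y hy; exact slit_of_re_pos (hre y hy)
    · intro y hy
      rw [Complex.exp_add, Complex.exp_log (re_pos_ne (hre y hy)), Complex.exp_pi_mul_I]; ring
  have := hYc.induction₂ (fun a b => P a ↔ P b) ?_ (fun _ _ _ _ _ _ h1 h2 => h1.trans h2)
    (fun _ _ _ _ h => h.symm) hz0Y (show z ∈ Yᶜ from hz)
  · exact this.1 hP0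
  · intro a ha
    obtain ⟨ε, hε, hball⟩ := Metric.isOpen_iff.1 hY.isClosed.isOpen_compl a ha
    have : Metric.ball a (ε / 2) ∈ nhdsWithin a Yᶜ :=
      mem_nhdsWithin_of_mem_nhds (Metric.ball_mem_nhds a (by positivity))
    filter_upwards [this] with b hb
    have hd : ∀ y ∈ Y, ε ≤ ‖y - a‖ := by
      intro y hy
      by_contra hlt
      push Not at hlt
      exact hball (by rwa [Metric.mem_ball, dist_eq_norm]) hy
    rw [Metric.mem_ball, dist_eq_norm] at hb
    constructor
    · apply step
      intro y hy
      have := hd y hy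
      rw [norm_sub_rev]; linarith
    · apply step
      intro y hy
      have h1 := hd y hy
      have h2 : ‖y - a‖ ≤ ‖y - b‖ + ‖b - a‖ :=
        norm_sub_le_norm_sub_add_norm_sub y b a
      linarith

lemma grid_sum (H V : ℕ → ℕ → ℂ) (M : ℕ) :
    ∑ i ∈ Finset.range M, ∑ j ∈ Finset.range M,
      (H i j + V (i + 1) j - H i (j + 1) - V i j) =
    ∑ i ∈ Finset.range M, (H i 0 - H i M) + ∑ j ∈ Finset.range M, (V M j - V 0 j) := by
  have h1 : ∀ i, ∑ j ∈ Finset.range M, (H i j - H i (j + 1)) = H i 0 - H i M :=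
    fun i => Finset.sum_range_sub' _ _
  have h2 : ∀ j, ∑ i ∈ Finset.range M, (V (i + 1) j - V i j) = V M j - V 0 j :=
    fun j => Finset.sum_range_sub (fun i => V i j) _
  simp_rw [← h1, ← h2]
  rw [Finset.sum_comm (f := fun j i => V (i + 1) j - V i j), ← Finset.sum_add_distrib]
  refine Finset.sum_congr rfl fun i _ => ?_
  rw [← Finset.sum_add_distrib]
  refine Finset.sum_congr rfl fun j _ => ?_
  ring

/-- A preconnected set meeting `Y` and its complement meets the frontier of `Y`. -/
lemma meets_frontier {α : Type*} [TopologicalSpace α] {s Y : Set α} (hs : IsPreconnected s)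
    {a b : α} (ha : a ∈ s) (hb : b ∈ s) (haY : a ∈ Y) (hbY : b ∉ Y) :
    ∃ c ∈ s, c ∈ frontier Y := by
  by_contra hn
  push Not at hn
  have hsub : s ⊆ interior Y ∪ (closure Y)ᶜ := by
    intro x hx
    have := hn x hx
    rw [frontier, mem_sdiff, not_and_not_right] at this
    by_cases h : x ∈ closure Y
    · exact Or.inl (this h)
    · exact Or.inr h
  obtain ⟨x, -, hx1, hx2⟩ := hs _ _ isOpen_interior isClosed_closure.isOpen_compl hsub
    ⟨a, ha, (hsub ha).resolve_right fun h => h (subset_closure haY)⟩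
    ⟨b, hb, (hsub hb).resolve_left fun h => hbY (interior_subset h)⟩
  exact hx2 (subset_closure (interior_subset hx1))

end LFP

namespace LFP
open Complex Set

/-- Uniform local connectedness of a subset, by connected sets. -/
def ULC {α : Type*} [PseudoMetricSpace α] (K : Set α) : Prop :=
  ∀ η > 0, ∃ δ > 0, ∀ x ∈ K, ∀ y ∈ K, dist x y < δ →
    ∃ M ⊆ K, IsPreconnected M ∧ x ∈ M ∧ y ∈ M ∧ ∀ z ∈ M, dist z x < η

set_option maxHeartbeats 1000000 in
/-- Fixed point property of nonseparating plane continua with locally connected boundary. -/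
theorem plane_fpp {Y K : Set ℂ} (hY : IsCompact Y) (hYconn : IsConnected Y)
    (hYc : IsPreconnected Yᶜ) (hKY : K ⊆ Y) (hfr : frontier Y ⊆ K) (hK : ULC K)
    (f : ℂ → ℂ) (hf : ContinuousOn f Y) (hmap : MapsTo f Y Y) : ∃ y ∈ Y, f y = y := by
  classical
  by_contra hno
  push Not at hno
  obtain ⟨y0, hy0⟩ := hYconn.nonempty
  -- lower bound for the displacement
  obtain ⟨η, hη, hηle⟩ : ∃ η > 0, ∀ y ∈ Y, η ≤ ‖f y - y‖ := by
    obtain ⟨x, hx, hxm⟩ := hY.exists_isMinOn ⟨y0, hy0⟩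
      (f := fun y => ‖f y - y‖) (hf.sub continuousOn_id).norm
    exact ⟨‖f x - x‖, norm_pos_iff.2 (sub_ne_zero.2 (hno x hx)), fun y hy => hxm hy⟩
  -- uniform continuity
  have huc := hY.uniformContinuousOn_of_continuous hf
  obtain ⟨δ₁, hδ₁, hu⟩ := Metric.uniformContinuousOn_iff.1 huc (η / 10) (by positivity)
  obtain ⟨δ₂, hδ₂, hulc⟩ := hK δ₁ hδ₁
  obtain ⟨h, hh, hh1, hh2, hh3⟩ : ∃ h : ℝ, 0 < h ∧ 6 * h < δ₁ ∧ 6 * h < δ₂ ∧ 6 * h < η / 10 := by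
    refine ⟨min δ₁ (min δ₂ (η / 10)) / 7, by positivity, ?_, ?_, ?_⟩
    · have := min_le_left δ₁ (min δ₂ (η / 10))
      linarith
    · have := (min_le_right δ₁ (min δ₂ (η / 10))).trans (min_le_left _ _)
      linarith
    · have := (min_le_right δ₁ (min δ₂ (η / 10))).trans (min_le_right _ _)
      have h0 : 0 < η / 10 := by positivity
      linarith
  -- approximating points
  have hyv : ∀ a : ℂ, ∃ y ∈ Y, (∃ y' ∈ Y, ‖a - y'‖ ≤ 2 * h) →
      ‖a - y‖ ≤ 2 * h ∧ (a ∉ Y → y ∈ K) := by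
    intro a
    by_cases hex : ∃ y' ∈ Y, ‖a - y'‖ ≤ 2 * h
    · by_cases haY : a ∈ Y
      · exact ⟨a, haY, fun _ => ⟨by simp; positivity, fun h => absurd haY h⟩⟩
      · obtain ⟨y', hy', hd⟩ := hex
        obtain ⟨c, hc, hcf⟩ := meets_frontier (convex_segment a y').isPreconnected
          (right_mem_segment ℝ a y') (left_mem_segment ℝ a y') hy' haY
        refine ⟨c, hKY (hfr hcf), fun _ => ⟨?_, fun _ => hfr hcf⟩⟩
        have h1 := norm_sub_le_of_mem_segment hc
        rw [norm_sub_rev] at h1 hd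
        exact h1.trans hd
    · exact ⟨y0, hy0, fun h => absurd h hex⟩
  choose yv hyvY hyvp using hyv
  have hL : ∀ z : ℂ, ∃ L : ℂ → ℂ, z ∉ Y → ContinuousOn L Y ∧ ∀ y ∈ Y, exp (L y) = y - z := by
    intro z
    by_cases hz : z ∈ Y
    · exact ⟨fun _ => 0, fun h => absurd hz h⟩
    · obtain ⟨L, h⟩ := exists_log hY hYc z hz
      exact ⟨L, fun _ => h⟩
  choose L hL using hL
  let w : ℂ → ℂ := fun z => f (yv z)
  have hwY : ∀ z, w z ∈ Y := fun z => hmap (hyvY z)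
  let g : ℂ → ℂ := fun z => w z - z
  let φ : ℂ → ℂ := fun z => L z (w z) - L z y0
  let E : ℂ → ℂ → ℂ := fun a b => log (g b / g a) - (φ b - φ a) - log ((b - y0) / (a - y0))
  let near : ℂ → Prop := fun a => ∃ y' ∈ Y, ‖a - y'‖ ≤ 2 * h
  have hgbig : ∀ a, near a → η - 2 * h ≤ ‖g a‖ := by
    intro a ha
    have h1 := hηle _ (hyvY a)
    have h2 := (hyvp a ha).1
    have h3 : ‖f (yv a) - yv a‖ ≤ ‖w a - a‖ + ‖a - yv a‖ :=
      norm_sub_le_norm_sub_add_norm_sub _ _ _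
    change _ ≤ ‖w a - a‖
    linarith
  have hyclose : ∀ a b, near a → near b → ∀ r, ‖a - b‖ ≤ r → ‖yv a - yv b‖ ≤ r + 4 * h := by
    intro a b ha hb r hr
    have h1 := (hyvp a ha).1
    have h2 := (hyvp b hb).1
    have h3 : ‖yv a - yv b‖ ≤ ‖yv a - a‖ + ‖a - yv b‖ := norm_sub_le_norm_sub_add_norm_sub _ _ _
    have h4 : ‖a - yv b‖ ≤ ‖a - b‖ + ‖b - yv b‖ := norm_sub_le_norm_sub_add_norm_sub _ _ _
    rw [norm_sub_rev (yv a) a] at h3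
    linarith
  have hgclose : ∀ a b, near a → near b → ‖a - b‖ ≤ 3 / 2 * h → ‖g b - g a‖ < η / 2 := by
    intro a b ha hb hab
    have h1 := hyclose a b ha hb _ hab
    have h2 := hu _ (hyvY b) _ (hyvY a) (by rw [dist_comm, dist_eq_norm]; linarith)
    rw [dist_eq_norm] at h2
    have h3 : ‖g b - g a‖ ≤ ‖w b - w a‖ + ‖a - b‖ := by
      have : g b - g a = (w b - w a) + (a - b) := by simp only [g]; ring
      rw [this]; exact norm_add_le _ _
    change ‖w b - w a‖ < _ at h2
    linarith
  -- the key computation on outer edges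
  have hF2 : ∀ a b, near a → near b → ‖a - b‖ ≤ h → (¬ (segment ℝ a b ∩ Y).Nonempty) →
      E a b = 0 := by
    intro a b ha hb hab hseg
    have hseg' : ∀ x ∈ Y, x ∉ segment ℝ a b := fun x hx hs => hseg ⟨x, hs, hx⟩
    have haY : a ∉ Y := fun h => hseg' a h (left_mem_segment _ _ _)
    have hbY : b ∉ Y := fun h => hseg' b h (right_mem_segment _ _ _)
    have hyaK := (hyvp a ha).2 haY
    have hybK := (hyvp b hb).2 hbY
    have hyab := hyclose a b ha hb _ hab
    obtain ⟨M, hMK, hM, haM, hbM, hMd⟩ := hulc _ hyaK _ hybK (by rw [dist_eq_norm]; linarith)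
    obtain ⟨hLb, hLbe⟩ := hL b hbY
    obtain ⟨hLa, hLae⟩ := hL a haY
    have hMY : M ⊆ Y := hMK.trans hKY
    have hN : IsPreconnected (f '' M) := hM.image f (hf.mono hMY)
    have hNY : f '' M ⊆ Y := by rintro _ ⟨x, hx, rfl⟩; exact hmap (hMY hx)
    have hwaM : w a ∈ f '' M := ⟨_, haM, rfl⟩
    have hwbM : w b ∈ f '' M := ⟨_, hbM, rfl⟩
    have hNd : ∀ x ∈ f '' M, ‖x - w a‖ < η / 10 := by
      rintro _ ⟨x, hx, rfl⟩
      have := hu x (hMY hx) _ (hyvY a) (hMd x hx)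
      rwa [dist_eq_norm] at this
    have hwab : η / 2 ≤ ‖w a - b‖ := by
      have h1 := hgbig a ha
      have h2 : ‖w a - a‖ ≤ ‖w a - b‖ + ‖b - a‖ := norm_sub_le_norm_sub_add_norm_sub _ _ _
      rw [norm_sub_rev b a] at h2
      change _ ≤ ‖w a - a‖ at h1
      linarith
    have hpos1 : ∀ x ∈ f '' M, 0 < ((x - b) / (w a - b)).re := by
      intro x hx
      apply re_pos_of_near
      have := hNd x hx
      have e : x - b - (w a - b) = x - w a := by ring
      rw [e]; linarith
    have hwab0 : w a - b ≠ 0 := by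
      intro h0; rw [h0, norm_zero] at hwab; linarith
    have s1 : L b (w b) - L b (w a) = log ((w b - b) / (w a - b)) := by
      refine log_unique hN (F := fun x => L b x - L b (w a))
        (G := fun x => log ((x - b) / (w a - b))) ?_ ?_ ?_ hwaM ?_ _ hwbM
      · exact (hLb.mono hNY).sub continuousOn_const
      · apply ContinuousOn.clog
        · fun_prop
        · intro x hx; exact slit_of_re_pos (hpos1 x hx)
      · intro x hx
        rw [Complex.exp_sub, hLbe _ (hNY hx), hLbe _ (hwY a), Complex.exp_log (re_pos_ne (hpos1 x hx))]
      · simp [div_self hwab0]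
    have hne : ∀ z, z ∉ Y → ∀ x ∈ Y, x - z ≠ 0 := by
      intro z hz x hx h0
      rw [sub_eq_zero] at h0
      exact hz (h0 ▸ hx)
    have s2 : (L b (w a) - L b y0) - (L a (w a) - L a y0) =
        log ((w a - b) / (w a - a)) - log ((y0 - b) / (y0 - a)) := by
      have hsl : ∀ x ∈ Y, (x - b) / (x - a) ∈ slitPlane :=
        fun x hx => ratio_mem_slitPlane (hseg' x hx)
      refine log_unique hYconn.isPreconnected
        (F := fun x => (L b x - L b y0) - (L a x - L a y0))
        (G := fun x => log ((x - b) / (x - a)) - log ((y0 - b) / (y0 - a))) ?_ ?_ ?_ hy0 ?_ _ (hwY a)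
      · exact (hLb.sub continuousOn_const).sub (hLa.sub continuousOn_const)
      · refine ContinuousOn.sub ?_ continuousOn_const
        apply ContinuousOn.clog
        · exact ContinuousOn.div (by fun_prop) (by fun_prop) (hne a haY)
        · exact hsl
      · intro x hx
        simp only [Complex.exp_sub]
        rw [hLbe _ hx, hLbe _ hy0, hLae _ hx, hLae _ hy0,
          Complex.exp_log (Complex.slitPlane_ne_zero (hsl x hx)),
          Complex.exp_log (Complex.slitPlane_ne_zero (hsl y0 hy0))]
        have := hne a haY x hx
        have := hne b hbY x hx
        have := hne a haY y0 hy0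
        have := hne b hbY y0 hy0
        field_simp
      · simp
    have s3 : log (g b / g a) = log ((w b - b) / (w a - b)) + log ((w a - b) / (w a - a)) := by
      have hp2 : 0 < ((w a - b) / (w a - a)).re := by
        apply re_pos_of_near
        have e : w a - b - (w a - a) = a - b := by ring
        have h1 := hgbig a ha
        change _ ≤ ‖w a - a‖ at h1
        rw [e]; linarith
      rw [← log_mul_of_re_pos (hpos1 _ hwbM) hp2]
      congr 1
      simp only [g]
      field_simp
    have s4 : log ((b - y0) / (a - y0)) = log ((y0 - b) / (y0 - a)) := by
      rw [← neg_div_neg_eq, neg_sub, neg_sub]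
    simp only [E, φ]
    rw [s3, s4]
    linear_combination -s1 - s2
  -- the grid
  obtain ⟨R, hR⟩ := hY.isBounded.exists_norm_le
  obtain ⟨N, hN⟩ := exists_nat_gt ((R + ‖y0‖) / h)
  rw [div_lt_iff₀ hh] at hN
  let z : ℕ → ℕ → ℂ := fun i j => y0 + h * (((i : ℝ) - N - 1 / 2 : ℝ) + ((j : ℝ) - N - 1 / 2 : ℝ) * I)
  have hzre : ∀ i j, (z i j).re = y0.re + h * ((i : ℝ) - N - 1 / 2) := by
    intro i j; simp [z]
  have hzim : ∀ i j, (z i j).im = y0.im + h * ((j : ℝ) - N - 1 / 2) := by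
    intro i j; simp [z]
  let E' : ℂ → ℂ → ℂ := fun a b => if (segment ℝ a b ∩ Y).Nonempty then E a b else 0
  let H : ℕ → ℕ → ℂ := fun i j => E' (z i j) (z (i + 1) j)
  let V : ℕ → ℕ → ℂ := fun i j => E' (z i j) (z i (j + 1))
  have hbx : ∀ i j, z (i + 1) j = z i j + h := by
    intro i j; simp only [z]; push_cast; ring
  have hdx : ∀ i j, z i (j + 1) = z i j + h * I := by
    intro i j; simp only [z]; push_cast; ring
  have hnh : ‖(h : ℂ)‖ = h := by simp [abs_of_pos hh]
  have hnhI : ‖(h : ℂ) * I‖ = h := by simp [abs_of_pos hh]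
  have e'_eq : ∀ a b, near a → near b → ‖a - b‖ ≤ h → E' a b = E a b := by
    intro a b ha hb hab
    by_cases hs : (segment ℝ a b ∩ Y).Nonempty
    · simp only [E', if_pos hs]
    · simp only [E', if_neg hs]; exact (hF2 a b ha hb hab hs).symm
  have hsq : ∀ i j, H i j + V (i + 1) j - H i (j + 1) - V i j =
      if i = N ∧ j = N then -(2 * Real.pi * I) else 0 := by
    intro i j
    have hb := hbx i j
    have hd := hdx i j
    have hc : z (i + 1) (j + 1) = z i j + h + h * I := by rw [hdx, hbx]
    have hA1 := hzre i j
    have hA2 := hzim i j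
    simp only [H, V]
    rw [hc, hb, hd]
    generalize ha : z i j = a at *
    have n1 : ‖a - (a + h)‖ ≤ h := by
      rw [show a - (a + h) = -(h : ℂ) by ring, norm_neg, hnh]
    have n2 : ‖a - (a + h * I)‖ ≤ h := by
      rw [show a - (a + h * I) = -(h * I : ℂ) by ring, norm_neg, hnhI]
    have n3 : ‖(a + h) - (a + h + h * I)‖ ≤ h := by
      rw [show (a + h) - (a + h + h * I) = -(h * I : ℂ) by ring, norm_neg, hnhI]
    have n4 : ‖(a + h * I) - (a + h + h * I)‖ ≤ h := by
      rw [show (a + h * I) - (a + h + h * I) = -(h : ℂ) by ring, norm_neg, hnh]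
    have n5 : ‖a - (a + h + h * I)‖ ≤ 3 / 2 * h := by
      rw [show a - (a + h + h * I) = -(h * (1 + I) : ℂ) by ring, norm_neg, norm_mul, hnh, mul_comm]
      apply mul_le_mul_of_nonneg_right _ hh.le
      rw [Complex.norm_eq_sqrt_sq_add_sq]
      apply Real.sqrt_le_iff.2
      norm_num
    by_cases hgood : ∃ y ∈ Y, ‖a - y‖ ≤ 2 * h ∧ ‖a + h - y‖ ≤ 2 * h ∧ ‖a + h + h * I - y‖ ≤ 2 * h ∧
        ‖a + h * I - y‖ ≤ 2 * h
    · obtain ⟨y, hy, g1, g2, g3, g4⟩ := hgood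
      have na : near a := ⟨y, hy, g1⟩
      have nb : near (a + h) := ⟨y, hy, g2⟩
      have nc : near (a + h + h * I) := ⟨y, hy, g3⟩
      have nd : near (a + h * I) := ⟨y, hy, g4⟩
      rw [e'_eq _ _ na nb n1, e'_eq _ _ nb nc n3, e'_eq _ _ nd nc n4, e'_eq _ _ na nd n2]
      have hga := hgbig a na
      have pos : ∀ x, near x → ‖a - x‖ ≤ 3 / 2 * h → 0 < (g x * (g a)⁻¹).re := by
        intro x hx hax
        rw [← div_eq_mul_inv]
        apply re_pos_of_near
        have := hgclose a x na hx hax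
        linarith
      have S1 := log_sum4 (g a)⁻¹ (pos a na (by simp; positivity)) (pos _ nb (by linarith))
        (pos _ nc n5) (pos _ nd (by linarith))
      have S2 : log ((a + h - y0) / (a - y0)) + log ((a + h + h * I - y0) / (a + h - y0))
          - log ((a + h + h * I - y0) / (a + h * I - y0)) - log ((a + h * I - y0) / (a - y0)) =
          if i = N ∧ j = N then 2 * Real.pi * I else 0 := by
        by_cases hij : i = N ∧ j = N
        · rw [if_pos hij]
          have ea : a - y0 = (h / 2 : ℂ) * (-1 - I) := by
            rw [← ha]; simp only [z]; rw [hij.1, hij.2]; push_cast; ring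
          have eb : a + h - y0 = (h / 2 : ℂ) * (1 - I) := by linear_combination ea
          have ec : a + h + h * I - y0 = (h / 2 : ℂ) * (1 + I) := by linear_combination ea
          have ed : a + h * I - y0 = (h / 2 : ℂ) * (-1 + I) := by linear_combination ea
          have hh0 : (h / 2 : ℂ) ≠ 0 := by
            have : (h : ℂ) ≠ 0 := by exact_mod_cast hh.ne'
            simpa using this
          have k1 : (-1 - I : ℂ) ≠ 0 := by
            intro h0; have := congrArg Complex.re h0; simp at this
          have k2 : (1 - I : ℂ) ≠ 0 := by
            intro h0; have := congrArg Complex.re h0; simp at this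
          have k3 : (-1 + I : ℂ) ≠ 0 := by
            intro h0; have := congrArg Complex.re h0; simp at this
          rw [ea, eb, ec, ed]
          simp only [mul_div_mul_left _ _ hh0]
          have r1 : (1 - I) / (-1 - I) = I := by
            rw [div_eq_iff k1]; linear_combination Complex.I_mul_I
          have r2 : (1 + I) / (1 - I) = I := by
            rw [div_eq_iff k2]; linear_combination Complex.I_mul_I
          have r3 : (1 + I) / (-1 + I) = -I := by
            rw [div_eq_iff k3]; linear_combination Complex.I_mul_I
          have r4 : (-1 + I) / (-1 - I) = -I := by
            rw [div_eq_iff k1]; linear_combination -Complex.I_mul_I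
          rw [r1, r2, r3, r4, Complex.log_I, Complex.log_neg_I]; ring
        · rw [if_neg hij]
          have hcase : i < N ∨ N < i ∨ j < N ∨ N < j := by omega
          rcases hcase with hlt | hlt | hlt | hlt
          · have hlt' : (i : ℝ) + 1 ≤ N := by exact_mod_cast hlt
            have q : h * ((i : ℝ) - N - 1 / 2) ≤ h * (-3 / 2) := by
              apply mul_le_mul_of_nonneg_left _ hh.le; linarith
            apply log_sum4 (-1) <;> simp [hA1] <;> linarith
          · have hlt' : (N : ℝ) + 1 ≤ i := by exact_mod_cast hlt
            have q : h * (1 / 2) ≤ h * ((i : ℝ) - N - 1 / 2) := by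
              apply mul_le_mul_of_nonneg_left _ hh.le; linarith
            apply log_sum4 1 <;> simp [hA1] <;> linarith
          · have hlt' : (j : ℝ) + 1 ≤ N := by exact_mod_cast hlt
            have q : h * ((j : ℝ) - N - 1 / 2) ≤ h * (-3 / 2) := by
              apply mul_le_mul_of_nonneg_left _ hh.le; linarith
            apply log_sum4 I <;> simp [hA2] <;> linarith
          · have hlt' : (N : ℝ) + 1 ≤ j := by exact_mod_cast hlt
            have q : h * (1 / 2) ≤ h * ((j : ℝ) - N - 1 / 2) := by
              apply mul_le_mul_of_nonneg_left _ hh.le; linarith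
            apply log_sum4 (-I) <;> simp [hA2] <;> linarith
      have S3 : -(if i = N ∧ j = N then 2 * Real.pi * I else 0 : ℂ) =
          if i = N ∧ j = N then -(2 * Real.pi * I) else 0 := by split_ifs <;> simp
      rw [← S3, ← S2]
      simp only [E]
      linear_combination S1
    · have tri : ∀ x y c : ℂ, ‖y - x‖ ≤ h → ‖x - c‖ ≤ h → ‖c - y‖ ≤ 2 * h := by
        intro x y c h1 h2
        have : ‖y - c‖ ≤ ‖y - x‖ + ‖x - c‖ := norm_sub_le_norm_sub_add_norm_sub _ _ _
        rw [norm_sub_rev c y]; linarith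
      have tri0 : ∀ x y : ℂ, ‖y - x‖ ≤ h → ‖x - y‖ ≤ 2 * h := by
        intro x y h1
        rw [norm_sub_rev]; linarith
      have segd : ∀ p q y : ℂ, y ∈ segment ℝ p q → ‖p - q‖ ≤ h → ‖y - p‖ ≤ h ∧ ‖y - q‖ ≤ h := by
        intro p q y hy hpq
        refine ⟨(norm_sub_le_of_mem_segment hy).trans (by rwa [norm_sub_rev]), ?_⟩
        rw [segment_symm] at hy
        exact (norm_sub_le_of_mem_segment hy).trans hpq
      have n1' := n1; have n2' := n2; have n3' := n3; have n4' := n4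
      rw [norm_sub_rev] at n1' n2' n3' n4'
      have z1 : ¬ (segment ℝ a (a + h) ∩ Y).Nonempty := by
        rintro ⟨y, hys, hy⟩
        obtain ⟨s1, s2⟩ := segd _ _ _ hys n1
        exact hgood ⟨y, hy, tri0 _ _ s1, tri0 _ _ s2, tri _ _ _ s2 n3, tri _ _ _ s1 n2⟩
      have z2 : ¬ (segment ℝ (a + h) (a + h + h * I) ∩ Y).Nonempty := by
        rintro ⟨y, hys, hy⟩
        obtain ⟨s1, s2⟩ := segd _ _ _ hys n3
        exact hgood ⟨y, hy, tri _ _ _ s1 n1', tri0 _ _ s1, tri0 _ _ s2, tri _ _ _ s2 n4'⟩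
      have z3 : ¬ (segment ℝ (a + h * I) (a + h + h * I) ∩ Y).Nonempty := by
        rintro ⟨y, hys, hy⟩
        obtain ⟨s1, s2⟩ := segd _ _ _ hys n4
        exact hgood ⟨y, hy, tri _ _ _ s1 n2', tri _ _ _ s2 n3', tri0 _ _ s2, tri0 _ _ s1⟩
      have z4 : ¬ (segment ℝ a (a + h * I) ∩ Y).Nonempty := by
        rintro ⟨y, hys, hy⟩
        obtain ⟨s1, s2⟩ := segd _ _ _ hys n2
        exact hgood ⟨y, hy, tri0 _ _ s1, tri _ _ _ s1 n1, tri _ _ _ s2 n4, tri0 _ _ s2⟩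
      have hij : ¬ (i = N ∧ j = N) := by
        intro hij
        apply hgood
        have ea : a - y0 = (h / 2 : ℂ) * (-1 - I) := by
          rw [← ha]; simp only [z]; rw [hij.1, hij.2]; push_cast; ring
        have eb : a + h - y0 = (h / 2 : ℂ) * (1 - I) := by linear_combination ea
        have ec : a + h + h * I - y0 = (h / 2 : ℂ) * (1 + I) := by linear_combination ea
        have ed : a + h * I - y0 = (h / 2 : ℂ) * (-1 + I) := by linear_combination ea
        have hh2' : ‖(h / 2 : ℂ)‖ = h / 2 := by simp [abs_of_pos hh]
        have bnd : ∀ s t : ℂ, ‖s‖ ≤ 1 → ‖t‖ ≤ 1 → ‖(h / 2 : ℂ) * (s + t)‖ ≤ 2 * h := by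
          intro s t hs ht
          rw [norm_mul, hh2']
          have := norm_add_le s t
          nlinarith
        refine ⟨y0, hy0, ?_, ?_, ?_, ?_⟩
        · rw [ea, sub_eq_add_neg]; exact bnd _ _ (by simp) (by simp)
        · rw [eb, sub_eq_add_neg]; exact bnd _ _ (by simp) (by simp)
        · rw [ec]; exact bnd _ _ (by simp) (by simp)
        · rw [ed]; exact bnd _ _ (by simp) (by simp)
      simp only [E', if_neg z1, if_neg z2, if_neg z3, if_neg z4, if_neg hij]
      ring
  have hsum := grid_sum H V (2 * N + 1)
  have hYre : ∀ y ∈ Y, |y.re - y0.re| < N * h := by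
    intro y hy
    have h1 := Complex.abs_re_le_norm (y - y0)
    have h2 := norm_sub_le y y0
    have h3 := hR y hy
    rw [Complex.sub_re] at h1
    linarith
  have hYim : ∀ y ∈ Y, |y.im - y0.im| < N * h := by
    intro y hy
    have h1 := Complex.abs_im_le_norm (y - y0)
    have h2 := norm_sub_le y y0
    have h3 := hR y hy
    rw [Complex.sub_im] at h1
    linarith
  have segre : ∀ p q : ℂ, p.re = q.re → N * h < |p.re - y0.re| → E' p q = 0 := by
    intro p q hpq hbig
    refine if_neg ?_
    rintro ⟨y, ⟨s, t, hs, ht, hst, rfl⟩, hy⟩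
    have := hYre _ hy
    have e : (s • p + t • q).re = p.re := by
      simp [← hpq]; rw [← add_mul, hst, one_mul]
    rw [e] at this
    linarith
  have segim : ∀ p q : ℂ, p.im = q.im → N * h < |p.im - y0.im| → E' p q = 0 := by
    intro p q hpq hbig
    refine if_neg ?_
    rintro ⟨y, ⟨s, t, hs, ht, hst, rfl⟩, hy⟩
    have := hYim _ hy
    have e : (s • p + t • q).im = p.im := by
      simp [← hpq]; rw [← add_mul, hst, one_mul]
    rw [e] at this
    linarith
  have b1 : ∀ i, H i 0 = 0 := by
    intro i
    apply segim
    · simp [hzim]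
    · rw [hzim, lt_abs]; right; push_cast; nlinarith
  have b2 : ∀ i, H i (2 * N + 1) = 0 := by
    intro i
    apply segim
    · simp [hzim]
    · rw [hzim, lt_abs]; left; push_cast; nlinarith
  have b3 : ∀ j, V 0 j = 0 := by
    intro j
    apply segre
    · simp [hzre]
    · rw [hzre, lt_abs]; right; push_cast; nlinarith
  have b4 : ∀ j, V (2 * N + 1) j = 0 := by
    intro j
    apply segre
    · simp [hzre]
    · rw [hzre, lt_abs]; left; push_cast; nlinarith
  simp only [b1, b2, b3, b4, hsq, sub_zero, Finset.sum_const_zero, add_zero] at hsum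
  rw [Finset.sum_eq_single N, Finset.sum_eq_single N] at hsum
  · simp [Real.pi_ne_zero] at hsum
  · intro j _ hj; simp [hj]
  · intro hj; simp at hj; omega
  · intro i _ hi; simp [hi]
  · intro hj; simp at hj; omega
end LFP

namespace LFP
open Set Filter Topology

theorem ulc_space {X : Type*} [MetricSpace X] [CompactSpace X] [LocallyConnectedSpace X]
    {ε : ℝ} (hε : 0 < ε) : ∃ δ > 0, ∀ x y : X, dist x y < δ →
      ∃ M : Set X, IsPreconnected M ∧ x ∈ M ∧ y ∈ M ∧ M ⊆ Metric.ball x ε := by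
  have h1 : ∀ c : X, ∃ V : Set X, V ⊆ Metric.ball c (ε / 2) ∧ IsOpen V ∧ c ∈ V ∧ IsConnected V :=
    fun c => (locallyConnectedSpace_iff_subsets_isOpen_isConnected.1 inferInstance) c _
      (Metric.ball_mem_nhds c (half_pos hε))
  choose V hV1 hV2 hV3 hV4 using h1
  obtain ⟨δ, hδ, hb⟩ := lebesgue_number_lemma_of_metric (isCompact_univ (X := X)) hV2
    (fun x _ => mem_iUnion.2 ⟨x, hV3 x⟩)
  refine ⟨δ, hδ, fun x y hxy => ?_⟩
  obtain ⟨c, hc⟩ := hb x (mem_univ _)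
  have hx : x ∈ V c := hc (Metric.mem_ball_self hδ)
  refine ⟨V c, (hV4 c).isPreconnected, hx, hc (by rwa [Metric.mem_ball, dist_comm]), fun z hz => ?_⟩
  have h2 := hV1 c hz
  have h3 := hV1 c hx
  rw [Metric.mem_ball] at *
  have := dist_triangle_right z x c
  linarith

theorem exists_chain {X : Type*} [MetricSpace X] {M : Set X} (hM : IsPreconnected M) {x y : X}
    (hx : x ∈ M) (hy : y ∈ M) {δ : ℝ} (hδ : 0 < δ) :
    ∃ (n : ℕ) (c : ℕ → X), c 0 = x ∧ (∀ i, n ≤ i → c i = y) ∧ (∀ i, c i ∈ M) ∧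
      ∀ i, dist (c i) (c (i + 1)) < δ := by
  have h : Relation.ReflTransGen (fun a b => a ∈ M ∧ b ∈ M ∧ dist a b < δ) x y := by
    refine hM.induction₂' (fun a b => Relation.ReflTransGen
      (fun a b => a ∈ M ∧ b ∈ M ∧ dist a b < δ) a b) ?_ ?_ hx hy
    · intro a ha
      filter_upwards [self_mem_nhdsWithin, mem_nhdsWithin_of_mem_nhds (Metric.ball_mem_nhds a hδ)]
        with b hb hb'
      rw [Metric.mem_ball] at hb'
      exact ⟨.single ⟨ha, hb, by rwa [dist_comm]⟩, .single ⟨hb, ha, hb'⟩⟩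
    · intro a b c _ _ _ h1 h2
      exact h1.trans h2
  induction h using Relation.ReflTransGen.head_induction_on with
  | refl => exact ⟨0, fun _ => y, rfl, fun _ _ => rfl, fun _ => hy, fun _ => by simpa using hδ⟩
  | head h1 h2 ih =>
    obtain ⟨n, c, h0, hn, hM', hd⟩ := ih h1.2.1
    rename_i a b
    refine ⟨n + 1, fun i => Nat.casesOn i a c, rfl, ?_, ?_, ?_⟩
    · rintro (_ | i) hi
      · omega
      · exact hn i (by omega)
    · rintro (_ | i)
      · exact h1.1
      · exact hM' i
    · rintro (_ | i)
      · show dist a (c 0) < δ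
        rw [h0]; exact h1.2.2
      · exact hd i

theorem refine_chain {X : Type*} [MetricSpace X] {ε δ δ' : ℝ} (hε : 0 < ε) (hδ' : 0 < δ')
    (hu : ∀ x y : X, dist x y < δ →
      ∃ M : Set X, IsPreconnected M ∧ x ∈ M ∧ y ∈ M ∧ M ⊆ Metric.ball x ε)
    (N : ℕ) (x : ℕ → X) (hx : ∀ i < N, dist (x i) (x (i + 1)) < δ) :
    ∃ (m : ℕ) (x' : ℕ → X), 0 < m ∧ x' 0 = x 0 ∧ x' (N * m) = x N ∧
      (∀ i < N * m, dist (x' i) (x' (i + 1)) < δ') ∧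
      ∀ i ≤ N * m, dist (x (i / m)) (x' i) < ε := by
  have h1 : ∀ i, ∃ (n : ℕ) (c : ℕ → X), c 0 = x i ∧ (i < N → (∀ j, n ≤ j → c j = x (i + 1)) ∧
      (∀ j, dist (x i) (c j) < ε) ∧ ∀ j, dist (c j) (c (j + 1)) < δ') := by
    intro i
    by_cases hi : i < N
    · obtain ⟨M, hM, h1, h2, h3⟩ := hu _ _ (hx i hi)
      obtain ⟨n, c, h4, h5, h6, h7⟩ := exists_chain hM h1 h2 hδ'
      refine ⟨n, c, h4, fun _ => ⟨h5, fun j => ?_, h7⟩⟩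
      have := h3 (h6 j)
      rwa [Metric.mem_ball, dist_comm] at this
    · exact ⟨0, fun _ => x i, rfl, fun h => absurd h hi⟩
  choose n c hc0 hc using h1
  obtain ⟨m, hm0, hm⟩ : ∃ m : ℕ, 0 < m ∧ ∀ i < N, n i ≤ m := by
    refine ⟨(Finset.range N).sup n + 1, by omega, fun i hi => ?_⟩
    have := Finset.le_sup (f := n) (Finset.mem_range.2 hi)
    omega
  refine ⟨m, fun i => c (i / m) (i % m), hm0, ?_, ?_, ?_, ?_⟩
  · simp [hc0]
  · simp [hc0, Nat.mul_div_cancel _ hm0]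
  · intro i hi
    have hi' : i / m < N := Nat.div_lt_of_lt_mul (by rwa [Nat.mul_comm])
    have hlt := Nat.mod_lt i hm0
    show dist (c (i / m) (i % m)) (c ((i + 1) / m) ((i + 1) % m)) < δ'
    by_cases h : i % m + 1 = m
    · have e1 : (i + 1) / m = i / m + 1 := by
        have := Nat.div_add_mod i m
        rw [Nat.mul_comm] at this
        rw [Nat.div_eq_iff hm0, Nat.add_mul, Nat.one_mul]
        generalize i / m * m = q at *
        generalize i % m = r at *
        omega
      have e2 : (i + 1) % m = 0 := by
        rw [Nat.add_mod_eq_ite]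
        rcases Nat.lt_or_ge 1 m with h1 | h1
        · rw [Nat.mod_eq_of_lt h1, if_pos (by omega)]; omega
        · have : m = 1 := by omega
          subst this; simp [Nat.mod_one]
      rw [e1, e2, hc0, ← (hc _ hi').1 m (hm _ hi')]
      conv_lhs => rw [← h]
      have := (hc _ hi').2.2 (i % m)
      rwa [h] at this ⊢
    · have e1 : (i + 1) / m = i / m := by
        have := Nat.div_add_mod i m
        have h3 : i % m + 1 < m := by omega
        rw [Nat.mul_comm] at this
        rw [Nat.div_eq_iff hm0]
        generalize i / m * m = q at *
        generalize i % m = r at *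
        omega
      have e2 : (i + 1) % m = i % m + 1 := by
        have h1 := Nat.div_add_mod i m
        have h2 := Nat.div_add_mod (i + 1) m
        rw [e1] at h2; omega
      rw [e1, e2]
      exact (hc _ hi').2.2 _
  · intro i hi
    rcases hi.lt_or_eq with h | h
    · exact (hc _ (Nat.div_lt_of_lt_mul (by rwa [Nat.mul_comm]))).2.1 _
    · subst h
      simp [hc0, Nat.mul_div_cancel _ hm0, hε]

theorem exists_path {X : Type*} [MetricSpace X] [CompactSpace X] [LocallyConnectedSpace X]
    {η : ℝ} (hη : 0 < η) : ∃ δ > 0, ∀ x y : X, dist x y < δ →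
      ∃ γ : ℝ → X, ContinuousOn γ (Icc 0 1) ∧ γ 0 = x ∧ γ 1 = y ∧
        ∀ t ∈ Icc (0 : ℝ) 1, γ t ∈ Metric.ball x η := by
  set C := η / 2 with hC
  have hCp : 0 < C := by positivity
  have hεp : ∀ k : ℕ, 0 < C / 2 / 2 ^ k := fun k => by positivity
  have h1 : ∀ k : ℕ, ∃ δ > 0, δ ≤ C / 2 / 2 ^ k ∧ ∀ x y : X, dist x y < δ →
      ∃ M : Set X, IsPreconnected M ∧ x ∈ M ∧ y ∈ M ∧ M ⊆ Metric.ball x (C / 2 / 2 ^ k) := by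
    intro k
    obtain ⟨δ, hδ, h⟩ := ulc_space (X := X) (hεp k)
    exact ⟨min δ (C / 2 / 2 ^ k), lt_min hδ (hεp k), min_le_right _ _,
      fun x y hxy => h x y (hxy.trans_le (min_le_left _ _))⟩
  choose δ hδ0 hδle hδ using h1
  refine ⟨δ 0, hδ0 0, fun x y hxy => ?_⟩
  have step : ∀ (k : ℕ) (p : ℕ × (ℕ → X)), ∃ p' : ℕ × (ℕ → X),
      (0 < p.1 ∧ ∀ i < p.1, dist (p.2 i) (p.2 (i + 1)) < δ k) →
      ((0 < p'.1 ∧ ∀ i < p'.1, dist (p'.2 i) (p'.2 (i + 1)) < δ (k + 1)) ∧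
        p'.2 0 = p.2 0 ∧ p'.2 p'.1 = p.2 p.1 ∧ ∃ m, 0 < m ∧ p'.1 = p.1 * m ∧
        ∀ i ≤ p'.1, dist (p.2 (i / m)) (p'.2 i) < C / 2 / 2 ^ k) := by
    rintro k ⟨N, z⟩
    by_cases h : 0 < N ∧ ∀ i < N, dist (z i) (z (i + 1)) < δ k
    · obtain ⟨m, x', hm, a, b, c, d⟩ := refine_chain (hεp k) (hδ0 (k + 1)) (hδ k) N z h.2
      exact ⟨⟨N * m, x'⟩, fun _ => ⟨⟨Nat.mul_pos h.1 hm, c⟩, a, b, m, hm, rfl, d⟩⟩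
    · exact ⟨⟨N, z⟩, fun h' => absurd h' h⟩
  choose F hF using step
  let s : ℕ → ℕ × (ℕ → X) := fun k => Nat.rec (1, fun i => if i = 0 then x else y) F k
  have s0 : s 0 = (1, fun i => if i = 0 then x else y) := rfl
  have ss : ∀ k, s (k + 1) = F k (s k) := fun k => rfl
  have good : ∀ k, 0 < (s k).1 ∧ ∀ i < (s k).1, dist ((s k).2 i) ((s k).2 (i + 1)) < δ k := by
    intro k
    induction k with
    | zero =>
      rw [s0]; refine ⟨one_pos, fun i hi => ?_⟩
      have : i = 0 := by simpa using hi
      subst this; simpa using hxy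
    | succ k ih => rw [ss]; exact (hF k _ ih).1
  have rel := fun k => (hF k _ (good k)).2
  simp only [← ss] at rel
  have st0 : ∀ k, (s k).2 0 = x := by
    intro k
    induction k with
    | zero => rw [s0]; simp
    | succ k ih => rw [(rel k).1, ih]
  have st1 : ∀ k, (s k).2 (s k).1 = y := by
    intro k
    induction k with
    | zero => rw [s0]; simp
    | succ k ih => rw [(rel k).2.1, ih]
  let g : ℕ → ℝ → X := fun k t => (s k).2 ⌊t * (s k).1⌋₊
  have hfl : ∀ k, ∀ t ∈ Icc (0 : ℝ) 1, ⌊t * (s k).1⌋₊ ≤ (s k).1 := by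
    intro k t ht
    apply Nat.floor_le_of_le
    have : (0 : ℝ) ≤ (s k).1 := Nat.cast_nonneg _
    nlinarith [ht.2]
  have hg : ∀ t ∈ Icc (0 : ℝ) 1, ∀ k, dist (g k t) (g (k + 1) t) ≤ C / 2 / 2 ^ k := by
    intro t ht k
    obtain ⟨m, hm, hN, hd⟩ := (rel k).2.2
    have h2 := (hd _ (hfl (k + 1) t ht)).le
    have : ⌊t * (s (k + 1)).1⌋₊ / m = ⌊t * (s k).1⌋₊ := by
      rw [← Nat.floor_div_natCast, hN]
      congr 1
      have : (m : ℝ) ≠ 0 := by positivity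
      push_cast; field_simp
    rwa [this] at h2
  have hlim : ∀ t ∈ Icc (0 : ℝ) 1, ∃ a, Tendsto (fun k => g k t) atTop (𝓝 a) :=
    fun t ht => cauchySeq_tendsto_of_complete (cauchySeq_of_le_geometric_two (hg t ht))
  have : Nonempty X := ⟨x⟩
  choose! γ hγ using hlim
  have hgγ : ∀ t ∈ Icc (0 : ℝ) 1, ∀ k, dist (g k t) (γ t) ≤ C / 2 ^ k :=
    fun t ht k => dist_le_of_le_geometric_two_of_tendsto (hg t ht) (hγ t ht) k
  refine ⟨γ, ?_, ?_, ?_, ?_⟩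
  · rw [Metric.continuousOn_iff]
    intro t ht e he
    obtain ⟨k, hk⟩ : ∃ k : ℕ, C / 2 ^ k * 3 < e := by
      have h3 : Tendsto (fun k : ℕ => C * 3 * (1 / 2 : ℝ) ^ k) atTop (𝓝 (C * 3 * 0)) :=
        (tendsto_pow_atTop_nhds_zero_of_lt_one (by norm_num) (by norm_num)).const_mul _
      rw [mul_zero] at h3
      obtain ⟨k, hk⟩ := (h3.eventually (gt_mem_nhds he)).exists
      refine ⟨k, lt_of_eq_of_lt ?_ hk⟩
      rw [one_div, inv_pow]; ring
    have hNp : (0 : ℝ) < (s k).1 := by exact_mod_cast (good k).1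
    refine ⟨1 / (s k).1, by positivity, fun t' ht' hd => ?_⟩
    have key : ∀ a ∈ Icc (0 : ℝ) 1, ∀ b ∈ Icc (0 : ℝ) 1, a ≤ b → b - a < 1 / (s k).1 →
        dist (g k a) (g k b) ≤ C / 2 ^ k := by
      intro a ha b hb hab hlt
      have h4 : b * (s k).1 < a * (s k).1 + 1 := by
        rw [lt_div_iff₀ hNp] at hlt; linarith
      have h5 : a * (s k).1 ≤ b * (s k).1 := mul_le_mul_of_nonneg_right hab hNp.le
      have h6 := Nat.floor_mono h5
      have h7 : ⌊b * (s k).1⌋₊ ≤ ⌊a * (s k).1⌋₊ + 1 := by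
        rw [← Nat.floor_add_one (mul_nonneg ha.1 hNp.le)]
        exact Nat.floor_mono h4.le
      have hpos : 0 ≤ C / 2 ^ k := by positivity
      rcases h6.lt_or_eq with h | h
      · have h8 : ⌊b * (s k).1⌋₊ = ⌊a * (s k).1⌋₊ + 1 := by omega
        have h9 := hfl k b hb
        show dist ((s k).2 _) ((s k).2 _) ≤ _
        rw [h8]
        refine ((good k).2 _ (by omega)).le.trans ((hδle k).trans ?_)
        rw [div_div, mul_comm, ← div_div]
        exact half_le_self hpos
      · show dist ((s k).2 _) ((s k).2 _) ≤ _
        rw [h, dist_self]; exact hpos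
    have h10 : dist (g k t') (g k t) ≤ C / 2 ^ k := by
      rw [Real.dist_eq, abs_lt] at hd
      rcases le_total t' t with h | h
      · exact key t' ht' t ht h (by linarith)
      · rw [dist_comm]; exact key t ht t' ht' h (by linarith)
    have := dist_triangle4 (γ t') (g k t') (g k t) (γ t)
    have a1 := hgγ t' ht' k
    have a2 := hgγ t ht k
    rw [dist_comm] at a1
    linarith
  · refine tendsto_nhds_unique (hγ 0 (by simp)) ?_
    simp only [g, zero_mul, Nat.floor_zero, st0]; exact tendsto_const_nhds
  · refine tendsto_nhds_unique (hγ 1 (by simp)) ?_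
    simp only [g, one_mul, Nat.floor_natCast, st1]; exact tendsto_const_nhds
  · intro t ht
    have a1 := hgγ t ht 0
    have a2 : dist x (g 0 t) ≤ C / 2 := by
      have h0 := hfl 0 t ht
      have h3 := hδle 0
      have : dist x (g 0 t) = dist x (if ⌊t * (s 0).1⌋₊ = 0 then x else y) := rfl
      rw [this]
      split_ifs
      · simp; positivity
      · simp at h3; linarith
    have := dist_triangle x (g 0 t) (γ t)
    rw [Metric.mem_ball, dist_comm]
    simp at a1
    linarith

theorem lpc {X : Type*} [MetricSpace X] [CompactSpace X] [LocallyConnectedSpace X] :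
    LocallyPathConnectedSpace X := by
  constructor
  intro x
  rw [hasBasis_self]
  intro t ht
  obtain ⟨η, hη, hb⟩ := Metric.mem_nhds_iff.1 ht
  obtain ⟨δ, hδ, h⟩ := exists_path (X := X) hη
  refine ⟨pathComponentIn (Metric.ball x η) x, ?_,
    isPathConnected_pathComponentIn (Metric.mem_ball_self hη), pathComponentIn_subset.trans hb⟩
  refine mem_of_superset (Metric.ball_mem_nhds x hδ) fun y hy => ?_
  rw [Metric.mem_ball, dist_comm] at hy
  obtain ⟨γ, hc, h0, h1, hm⟩ := h x y hy
  exact JoinedIn.ofLine hc h0 h1 (by rintro _ ⟨t, ht, rfl⟩; exact hm t ht)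

end LFP

namespace LFP
open Set Filter Topology

/-- admissible closed sets for arc reduction -/
def Adm (s : ℝ → ℂ) : Set (Set ℝ) :=
  {C | IsClosed C ∧ C ⊆ Icc 0 1 ∧ (0 : ℝ) ∈ C ∧ (1 : ℝ) ∈ C ∧
    ∀ a ∈ C, ∀ b ∈ C, a < b → (∀ x ∈ C, ¬ (a < x ∧ x < b)) → s a = s b}

theorem adm_min (s : ℝ → ℂ) (hs : Continuous s) : ∃ C, Minimal (· ∈ Adm s) C := by
  apply zorn_superset
  intro c hcS hc
  rcases c.eq_empty_or_nonempty with rfl | hne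
  · refine ⟨Icc 0 1, ⟨isClosed_Icc, subset_rfl, by simp, by simp, ?_⟩, by simp⟩
    intro a ha b hb hab h
    exact absurd ⟨by linarith, by linarith⟩
      (h ((a + b) / 2) ⟨by linarith [ha.1, hb.1], by linarith [ha.2, hb.2]⟩)
  refine ⟨⋂₀ c, ⟨isClosed_sInter fun C hC => (hcS hC).1, ?_, fun C hC => (hcS hC).2.2.1,
    fun C hC => (hcS hC).2.2.2.1, ?_⟩, fun C hC => sInter_subset_of_mem hC⟩
  · obtain ⟨C, hC⟩ := hne
    exact (sInter_subset_of_mem hC).trans (hcS hC).2.1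
  intro a ha b hb hab hgap
  by_contra hne'
  have hpos : 0 < dist (s a) (s b) := dist_pos.2 hne'
  set ε := dist (s a) (s b) / 2 with hε
  have hεp : 0 < ε := by positivity
  obtain ⟨d1, hd1, h1⟩ := Metric.continuous_iff.1 hs a ε hεp
  obtain ⟨d2, hd2, h2⟩ := Metric.continuous_iff.1 hs b ε hεp
  obtain ⟨η, hη, hηd1, hηd2, hηab⟩ : ∃ η > 0, η < d1 ∧ η < d2 ∧ η < (b - a) / 2 := by
    refine ⟨min (min d1 d2) ((b - a) / 2) / 2, ?_, ?_, ?_, ?_⟩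
    · have : 0 < b - a := by linarith
      positivity
    all_goals
      have h0 : 0 < min (min d1 d2) ((b - a) / 2) := by
        have : 0 < b - a := by linarith
        positivity
      have q1 := min_le_left (min d1 d2) ((b - a) / 2)
      have q2 := min_le_right (min d1 d2) ((b - a) / 2)
      have q3 := min_le_left d1 d2
      have q4 := min_le_right d1 d2
      linarith
  obtain ⟨C, hC, hCe⟩ : ∃ C ∈ c, Icc (a + η) (b - η) ∩ C = ∅ := by
    have : Nonempty c := hne.to_subtype
    have g1 : Icc (a + η) (b - η) ∩ ⋂ C : c, (C : Set ℝ) = ∅ := by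
      rw [eq_empty_iff_forall_notMem]
      rintro x ⟨hx1, hx2⟩
      refine hgap x ?_ ⟨by linarith [hx1.1], by linarith [hx1.2]⟩
      rintro C hC
      exact mem_iInter.1 hx2 ⟨C, hC⟩
    have g2 : Directed (· ⊇ ·) (fun C : c => (C : Set ℝ)) := by
      intro C D
      rcases hc.total C.2 D.2 with h | h
      · exact ⟨C, subset_rfl, h⟩
      · exact ⟨D, h, subset_rfl⟩
    obtain ⟨C, hC⟩ := (isCompact_Icc (a := a + η) (b := b - η)).elim_directed_family_closed
      (fun C : c => (C : Set ℝ)) (fun C => (hcS C.2).1) g1 g2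
    exact ⟨C, C.2, hC⟩
  have hCa : a ∈ C := ha C hC
  have hCb : b ∈ C := hb C hC
  obtain ⟨a', ⟨ha'C, ha'1⟩, ha'2⟩ := ((isCompact_Icc (a := a) (b := a + η)).inter_left
    (hcS hC).1).exists_isGreatest ⟨a, hCa, by simp [hη.le]⟩
  obtain ⟨b', ⟨hb'C, hb'1⟩, hb'2⟩ := ((isCompact_Icc (a := b - η) (b := b)).inter_left
    (hcS hC).1).exists_isLeast ⟨b, hCb, by simp [hη.le]⟩
  have e : s a' = s b' := by
    refine (hcS hC).2.2.2.2 a' ha'C b' hb'C (by linarith [ha'1.2, hb'1.1]) ?_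
    rintro x hx ⟨hx1, hx2⟩
    have hx3 : ¬ x ≤ a + η := fun h => by
      have := ha'2 ⟨hx, by linarith [ha'1.1], h⟩
      linarith
    have hx4 : ¬ b - η ≤ x := fun h => by
      have := hb'2 ⟨hx, h, by linarith [hb'1.2]⟩
      linarith
    have : x ∈ Icc (a + η) (b - η) ∩ C := ⟨⟨by linarith, by linarith⟩, hx⟩
    rw [hCe] at this
    exact this
  have q1 := h1 a' (by rw [Real.dist_eq, abs_lt]; constructor <;> linarith [ha'1.1, ha'1.2])
  have q2 := h2 b' (by rw [Real.dist_eq, abs_lt]; constructor <;> linarith [hb'1.1, hb'1.2])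
  rw [e, dist_comm] at q1
  have := dist_triangle (s a) (s b') (s b)
  linarith

theorem arc_red (s : ℝ → ℂ) (hs : Continuous s) : ∃ s' : ℝ → ℂ, ContinuousOn s' (Icc 0 1) ∧
    s' 0 = s 0 ∧ s' 1 = s 1 ∧ (∀ t ∈ Icc (0 : ℝ) 1, ∃ t' ∈ Icc (0 : ℝ) 1, s' t = s t') ∧
    ∀ a b c, 0 ≤ a → a ≤ c → c ≤ b → b ≤ 1 → s' a = s' b → s' c = s' a := by
  obtain ⟨C, ⟨hCc, hC01, hC0, hC1, hCg⟩, hmin⟩ := adm_min s hs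
  have key : ∀ a ∈ C, ∀ b ∈ C, a < b → s a = s b → ∀ x ∈ C, ¬ (a < x ∧ x < b) := by
    intro a ha b hb hab hsab x hx hx'
    have hm : C \ Ioo a b ∈ Adm s := by
      refine ⟨hCc.sdiff isOpen_Ioo, sdiff_subset.trans hC01, ⟨hC0, fun h => ?_⟩,
        ⟨hC1, fun h => ?_⟩, ?_⟩
      · have := (hC01 ha).1; linarith [h.1]
      · have := (hC01 hb).2; linarith [h.2]
      · rintro p ⟨hp, hp'⟩ q ⟨hq, hq'⟩ hpq hg
        by_cases hgap : ∀ x ∈ C, ¬ (p < x ∧ x < q)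
        · exact hCg p hp q hq hpq hgap
        · push Not at hgap
          obtain ⟨y, hy, hpy, hyq⟩ := hgap
          have hyab : y ∈ Ioo a b := by
            by_contra h
            exact hg y ⟨hy, h⟩ ⟨hpy, hyq⟩
          have h1 := hg a ⟨ha, fun h => lt_irrefl _ h.1⟩
          have h2 := hg b ⟨hb, fun h => lt_irrefl _ h.2⟩
          have hpa : p = a := by
            rw [mem_Ioo] at hp' hyab
            push Not at h1 hp'
            apply le_antisymm
            · by_contra hlt
              push Not at hlt
              linarith [hp' hlt]
            · by_contra hlt
              push Not at hlt
              linarith [h1 hlt]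
          have hqb : q = b := by
            rw [mem_Ioo] at hq' hyab
            push Not at h2 hq'
            apply le_antisymm
            · by_contra hlt
              push Not at hlt
              have := h2 (by linarith)
              linarith
            · by_contra hlt
              push Not at hlt
              have := hq' (by linarith)
              linarith
          rw [hpa, hqb, hsab]
    have := hmin hm sdiff_subset hx
    exact this.2 hx'
  have hl : ∀ t : ℝ, ∃ l, t ∈ Icc (0 : ℝ) 1 → IsGreatest (C ∩ Icc 0 t) l := by
    intro t
    by_cases ht : t ∈ Icc (0 : ℝ) 1
    · obtain ⟨l, hl⟩ := ((isCompact_Icc (a := (0 : ℝ)) (b := t)).inter_left hCc).exists_isGreatest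
        ⟨0, hC0, le_rfl, ht.1⟩
      exact ⟨l, fun _ => hl⟩
    · exact ⟨0, fun h => absurd h ht⟩
  choose l hl using hl
  have lC : ∀ t ∈ Icc (0 : ℝ) 1, l t ∈ C := fun t ht => (hl t ht).1.1
  have lle : ∀ t ∈ Icc (0 : ℝ) 1, l t ≤ t := fun t ht => (hl t ht).1.2.2
  have lmax : ∀ t ∈ Icc (0 : ℝ) 1, ∀ x ∈ C, x ≤ t → x ≤ l t :=
    fun t ht x hx hxt => (hl t ht).2 ⟨hx, (hC01 hx).1, hxt⟩
  have lmono : ∀ t ∈ Icc (0 : ℝ) 1, ∀ t' ∈ Icc (0 : ℝ) 1, t ≤ t' → l t ≤ l t' :=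
    fun t ht t' ht' h => lmax t' ht' _ (lC t ht) ((lle t ht).trans h)
  have lfix : ∀ t ∈ C, l t = t := fun t ht =>
    le_antisymm (lle t (hC01 ht)) (lmax t (hC01 ht) t ht le_rfl)
  refine ⟨fun t => s (l t), ?_, ?_, ?_, ?_, ?_⟩
  · rw [Metric.continuousOn_iff]
    intro t0 ht0 e he
    obtain ⟨d, hd, hu⟩ := Metric.uniformContinuousOn_iff.1
      ((isCompact_Icc (a := (0 : ℝ)) (b := 1)).uniformContinuousOn_of_continuous hs.continuousOn)
      e he
    have main : ∀ t ∈ Icc (0 : ℝ) 1, ∀ t' ∈ Icc (0 : ℝ) 1, t ≤ t' → t' - t < d →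
        dist (s (l t)) (s (l t')) < e := by
      intro t ht t' ht' htt hlt
      by_cases heq : l t = l t'
      · rw [heq, dist_self]; exact he
      have hlt' : l t < l t' := lt_of_le_of_ne (lmono t ht t' ht' htt) heq
      have h1 : t < l t' := by
        by_contra h
        push Not at h
        exact absurd (lmax t ht _ (lC t' ht') h) (not_le.2 hlt')
      obtain ⟨r, ⟨hrC, hr1⟩, hr2⟩ := ((isCompact_Icc (a := t) (b := 1)).inter_left
        hCc).exists_isLeast ⟨1, hC1, ht.2, le_rfl⟩
      have hr3 : r ≤ l t' := hr2 ⟨lC t' ht', h1.le, (hC01 (lC t' ht')).2⟩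
      have e1 : s (l t) = s r := by
        rcases ((lle t ht).trans hr1.1).lt_or_eq with h | h
        · refine hCg _ (lC t ht) _ hrC h ?_
          rintro x hx ⟨hx1, hx2⟩
          rcases le_total x t with h3 | h3
          · exact absurd (lmax t ht x hx h3) (not_le.2 hx1)
          · exact absurd (hr2 ⟨hx, h3, (hC01 hx).2⟩) (not_le.2 hx2)
        · rw [h]
      rw [e1]
      have h4 := lle t' ht'
      refine hu r (hC01 hrC) _ (hC01 (lC t' ht')) ?_
      rw [Real.dist_eq, abs_lt]
      constructor <;> linarith [hr1.1]
    refine ⟨d, hd, fun t ht hdist => ?_⟩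
    rw [Real.dist_eq, abs_lt] at hdist
    rcases le_total t t0 with h | h
    · exact main t ht t0 ht0 h (by linarith)
    · rw [dist_comm]; exact main t0 ht0 t ht h (by linarith)
  · show s (l 0) = s 0
    rw [lfix 0 hC0]
  · show s (l 1) = s 1
    rw [lfix 1 hC1]
  · exact fun t ht => ⟨l t, hC01 (lC t ht), rfl⟩
  · intro a b c ha hac hcb hb hab
    have hA : a ∈ Icc (0 : ℝ) 1 := ⟨ha, by linarith⟩
    have hB : b ∈ Icc (0 : ℝ) 1 := ⟨by linarith, hb⟩
    have hc : c ∈ Icc (0 : ℝ) 1 := ⟨by linarith, by linarith⟩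
    have h1 := lmono a hA c hc hac
    have h2 := lmono c hc b hB hcb
    show s (l c) = s (l a)
    rcases h1.lt_or_eq with h3 | h3
    · rcases h2.lt_or_eq with h4 | h4
      · exact absurd ⟨h3, h4⟩ (key _ (lC a hA) _ (lC b hB) (h3.trans h4) hab _ (lC c hc))
      · rw [h4]; exact hab.symm
    · rw [h3]

end LFP

namespace LFP
open Set Filter Topology

theorem runmax (g : ℝ → ℝ) (hg : Continuous g) (h0 : ∀ t, 0 ≤ g t) (h1 : ∀ t, g t ≤ 1) :
    ∃ M : ℝ → ℝ, Continuous M ∧ (∀ t, 0 ≤ M t) ∧ (∀ t, M t ≤ 1) ∧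
      (∀ t, 0 ≤ t → ∀ r ∈ Icc 0 t, g r ≤ M t) ∧
      (∀ t c, 0 ≤ t → (∀ r ∈ Icc 0 t, g r ≤ c) → M t ≤ c) := by
  have hb : ∀ t, BddAbove ((fun r => g (r * t)) '' Icc 0 1) := fun t =>
    ⟨1, by rintro _ ⟨r, _, rfl⟩; exact h1 _⟩
  have hne : ∀ t, ((fun r => g (r * t)) '' Icc (0 : ℝ) 1).Nonempty := fun t =>
    ⟨_, 0, by simp, rfl⟩
  refine ⟨fun t => sSup ((fun r => g (r * t)) '' Icc 0 1), ?_, ?_, ?_, ?_, ?_⟩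
  · refine IsCompact.continuous_sSup (f := fun t r => g (r * t)) isCompact_Icc ?_
    exact hg.comp (continuous_snd.mul continuous_fst)
  · exact fun t => (h0 _).trans (le_csSup (hb t) ⟨0, by simp, rfl⟩)
  · intro t
    apply csSup_le (hne t)
    rintro _ ⟨r, _, rfl⟩; exact h1 _
  · intro t ht r hr
    apply le_csSup (hb t)
    rcases ht.eq_or_lt with h | h
    · subst h
      have : r = 0 := le_antisymm hr.2 hr.1
      exact ⟨0, by simp, by simp [this]⟩
    · exact ⟨r / t, ⟨div_nonneg hr.1 ht, div_le_one_of_le₀ hr.2 ht⟩, by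
        show g (r / t * t) = _
        rw [div_mul_cancel₀ _ h.ne']⟩
  · intro t c ht hc
    apply csSup_le (hne t)
    rintro _ ⟨r, hr, rfl⟩
    exact hc _ ⟨mul_nonneg hr.1 ht, by nlinarith [hr.2]⟩

theorem exists_phi (s : ℝ → ℂ) (hs : Continuous s)
    (hm : ∀ a b c, 0 ≤ a → a ≤ c → c ≤ b → b ≤ 1 → s a = s b → s c = s a) (hne : s 0 ≠ s 1) :
    ∃ φ : ℝ → ℝ, Continuous φ ∧ φ 0 = 0 ∧ φ 1 = 1 ∧
      (∀ a b, 0 ≤ a → a ≤ b → b ≤ 1 → φ a ≤ φ b) ∧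
      (∀ a b, 0 ≤ a → a ≤ b → b ≤ 1 → (φ a = φ b ↔ s a = s b)) := by
  let w := TopologicalSpace.denseSeq (ℂ × ℝ)
  let f : ℕ → ℂ → ℝ := fun n z => max 0 (min 1 ((w n).2 - dist z (w n).1))
  have hfc : ∀ n, Continuous (f n) := fun n => by fun_prop
  have hf0 : ∀ n z, 0 ≤ f n z := fun n z => le_max_left _ _
  have hf1 : ∀ n z, f n z ≤ 1 := fun n z => max_le zero_le_one (min_le_left _ _)
  choose M hMc hM0 hM1 hMle hMsup using fun n =>
    runmax (fun t => f n (s t)) ((hfc n).comp hs) (fun t => hf0 n _) (fun t => hf1 n _)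
  have hsum : ∀ t, Summable fun n : ℕ => (1 / 2 : ℝ) ^ n * M n t := fun t =>
    Summable.of_nonneg_of_le (fun n => mul_nonneg (by positivity) (hM0 n t))
      (fun n => mul_le_of_le_one_right (by positivity) (hM1 n t)) summable_geometric_two
  let ψ : ℝ → ℝ := fun t => ∑' n : ℕ, (1 / 2 : ℝ) ^ n * M n t
  have hψc : Continuous ψ := by
    refine continuous_tsum (fun n => continuous_const.mul (hMc n)) summable_geometric_two ?_
    intro n t
    rw [Real.norm_of_nonneg (mul_nonneg (by positivity) (hM0 n t))]
    exact mul_le_of_le_one_right (by positivity) (hM1 n t)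
  have hMm : ∀ n a b, 0 ≤ a → a ≤ b → M n a ≤ M n b := fun n a b ha hab =>
    hMsup n a _ ha fun r hr => hMle n b (ha.trans hab) r ⟨hr.1, hr.2.trans hab⟩
  have hψm : ∀ a b, 0 ≤ a → a ≤ b → b ≤ 1 → ψ a ≤ ψ b := fun a b ha hab hb =>
    (hsum a).tsum_le_tsum (fun n => mul_le_mul_of_nonneg_left (hMm n a b ha hab) (by positivity))
      (hsum b)
  have hψlt : ∀ a b, 0 ≤ a → a ≤ b → b ≤ 1 → s a ≠ s b → ψ a < ψ b := by
    intro a b ha hab hb hsab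
    have hcl : IsCompact (s '' Icc 0 a) := isCompact_Icc.image hs
    have hnot : s b ∉ s '' Icc 0 a := by
      rintro ⟨c, hc, hcb⟩
      exact hsab ((hm c b a hc.1 hc.2 hab hb hcb).trans hcb)
    obtain ⟨ρ, hρ, hball⟩ := Metric.isOpen_iff.1 hcl.isClosed.isOpen_compl (s b) hnot
    obtain ⟨n, hn⟩ := (TopologicalSpace.denseRange_denseSeq (ℂ × ℝ)).exists_dist_lt
      (s b, ρ / 2) (show 0 < ρ / 8 by positivity)
    rw [Prod.dist_eq, max_lt_iff] at hn
    obtain ⟨hn1, hn2⟩ := hn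
    change dist (s b) (w n).1 < _ at hn1
    change dist (ρ / 2) (w n).2 < _ at hn2
    rw [Real.dist_eq, abs_lt] at hn2
    have e1 : M n a ≤ 0 := by
      apply hMsup n a 0 ha
      intro r hr
      have : ¬ dist (s r) (s b) < ρ := fun h => hball h ⟨r, hr, rfl⟩
      have h3 := dist_triangle_right (s r) (s b) (w n).1
      apply max_le le_rfl
      refine (min_le_right _ _).trans ?_
      linarith
    have e2 : 0 < M n b := by
      refine lt_of_lt_of_le ?_ (hMle n b (ha.trans hab) b ⟨ha.trans hab, le_rfl⟩)
      refine lt_max_of_lt_right (lt_min one_pos ?_)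
      linarith
    refine Summable.tsum_lt_tsum (i := n) (fun n => mul_le_mul_of_nonneg_left
      (hMm n a b ha hab) (by positivity)) ?_ (hsum a) (hsum b)
    exact mul_lt_mul_of_pos_left (by linarith) (by positivity)
  have hψeq : ∀ a b, 0 ≤ a → a ≤ b → b ≤ 1 → s a = s b → ψ a = ψ b := by
    intro a b ha hab hb hsab
    have : ∀ n, M n a = M n b := by
      intro n
      refine le_antisymm (hMm n a b ha hab) (hMsup n b _ (ha.trans hab) fun r hr => ?_)
      rcases le_total r a with h | h
      · exact hMle n a ha r ⟨hr.1, h⟩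
      · show f n (s r) ≤ _
        rw [hm a b r ha h hr.2 hb hsab]
        exact hMle n a ha a ⟨ha, le_rfl⟩
    simp only [ψ, this]
  have hp : 0 < ψ 1 - ψ 0 := sub_pos.2 (hψlt 0 1 le_rfl zero_le_one le_rfl hne)
  refine ⟨fun t => (ψ t - ψ 0) / (ψ 1 - ψ 0), by fun_prop, by simp, div_self hp.ne', ?_, ?_⟩
  · intro a b ha hab hb
    exact div_le_div_of_nonneg_right (sub_le_sub_right (hψm a b ha hab hb) _) hp.le
  · intro a b ha hab hb
    rw [div_left_inj' hp.ne', sub_left_inj]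
    constructor
    · intro h
      by_contra h'
      exact (hψlt a b ha hab hb h').ne h
    · exact hψeq a b ha hab hb

end LFP

namespace LFP
open Complex Set

lemma glog {E : Type*} [NormedAddCommGroup E] [NormedSpace ℝ E] (g : E → ℂ) (hg : Continuous g)
    (h0 : ∀ x, g x ≠ 0) : ∃ L : E → ℂ, Continuous L ∧ ∀ x, exp (L x) = g x := by
  have : LocallyPathConnectedSpace E := inferInstance
  obtain ⟨x0, hx0⟩ : ∃ e0, exp e0 = g 0 := ⟨log (g 0), exp_log (h0 0)⟩
  obtain ⟨F, ⟨_, hF⟩, _⟩ := Complex.isCoveringMap_exp.existsUnique_continuousMap_lifts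
    (⟨fun x => ⟨g x, h0 x⟩, by fun_prop⟩ : C(E, {z : ℂ // z ≠ 0})) 0 x0 (Subtype.ext hx0)
  exact ⟨F, F.continuous, fun x => congrArg Subtype.val (congrFun hF x)⟩

theorem chord (s : ℝ → ℂ) (hs : Continuous s) (n : ℤ) (hn : 2 ≤ n)
    (h : s 1 = s 0 + 2 * Real.pi * I * n) :
    ∃ a ∈ Ico (0 : ℝ) 1, ∃ b ∈ Ico (0 : ℝ) 1, ∃ j : ℤ, j ≠ 0 ∧ s b - s a = 2 * Real.pi * I * j := by
  have hqc : Continuous ((fun t : ℝ => s t - 2 * Real.pi * I * n * t) ∘ Int.fract) := by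
    apply ContinuousOn.comp_fract''
    · apply Continuous.continuousOn; fun_prop
    · simp [h]
  let S : ℝ → ℂ := fun t => (s (Int.fract t) - 2 * Real.pi * I * n * (Int.fract t : ℝ)) +
    2 * Real.pi * I * n * t
  have hSc : Continuous S := by
    have : Continuous fun t : ℝ => (2 * Real.pi * I * n * t : ℂ) := by fun_prop
    exact hqc.add this
  have hSf : ∀ t, S t = s (Int.fract t) + 2 * Real.pi * I * n * (⌊t⌋ : ℝ) := by
    intro t
    simp only [S]
    have : (Int.fract t : ℝ) = t - ⌊t⌋ := rfl
    have h2 : ((Int.fract t : ℝ) : ℂ) = t - ((⌊t⌋ : ℝ) : ℂ) := by rw [this]; push_cast; rfl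
    rw [h2]; ring
  have hS1 : ∀ t, S (t + 1) = S t + 2 * Real.pi * I * n := by
    intro t
    rw [hSf, hSf, Int.fract_add_one, Int.floor_add_one]; push_cast; ring
  have hSm1 : ∀ t, S (t - 1) = S t - 2 * Real.pi * I * n := by
    intro t
    have := hS1 (t - 1)
    rw [sub_add_cancel] at this; rw [this]; ring
  have hre : ∀ t, (S t).re = (s (Int.fract t)).re := by
    intro t; rw [hSf]; simp
  by_contra hcon
  push Not at hcon
  let Q : ℝ × ℝ → ℂ := fun p => S p.2 - S p.1 - 2 * Real.pi * I
  have hQc : Continuous Q := by fun_prop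
  have hQ0 : ∀ p, Q p ≠ 0 := by
    rintro ⟨t, t'⟩ h0
    refine hcon (Int.fract t) ⟨Int.fract_nonneg _, Int.fract_lt_one _⟩ (Int.fract t')
      ⟨Int.fract_nonneg _, Int.fract_lt_one _⟩ (1 - n * (⌊t'⌋ - ⌊t⌋)) ?_ ?_
    · intro h1
      have : n ∣ 1 := ⟨⌊t'⌋ - ⌊t⌋, by linarith⟩
      have := Int.le_of_dvd one_pos this
      omega
    · have : S t' - S t - 2 * Real.pi * I = 0 := h0
      rw [hSf, hSf] at this
      push_cast at this ⊢
      linear_combination this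
  obtain ⟨Λ, hΛc, hΛ⟩ := glog Q hQc hQ0
  have hQp : ∀ t, Q (t, t + 1) = (2 * Real.pi * (n - 1) : ℝ) * I := by
    intro t; simp only [Q, hS1]; push_cast; ring
  have hQm : ∀ t, Q (t, t - 1) = (2 * Real.pi * (n + 1) : ℝ) * (-I) := by
    intro t; simp only [Q, hSm1]; push_cast; ring
  have hn' : (2 : ℝ) ≤ n := by exact_mod_cast hn
  have hpi := Real.pi_pos
  have p1 : 0 < 2 * Real.pi * ((n : ℝ) - 1) := by
    have : 0 < (n : ℝ) - 1 := by linarith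
    positivity
  have p2 : 0 < 2 * Real.pi * ((n : ℝ) + 1) := by
    have : 0 < (n : ℝ) + 1 := by linarith
    positivity
  have hconst : ∀ t t' : ℝ, Λ (t, t + 1) - Λ (t, t - 1) = Λ (t', t' + 1) - Λ (t', t' - 1) := by
    intro t t'
    refine log_unique (isPreconnected_univ) (F := fun t : ℝ => Λ (t, t + 1) - Λ (t, t - 1))
      (G := fun _ => Λ (t', t' + 1) - Λ (t', t' - 1)) ?_ ?_ ?_ (mem_univ t') rfl t (mem_univ t)
    · apply Continuous.continuousOn; fun_prop
    · exact continuousOn_const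
    · intro x _
      simp only [Complex.exp_sub, hΛ, hQp, hQm]
  obtain ⟨t1, ht1, hmax⟩ := (isCompact_Icc (a := (0 : ℝ)) (b := 1)).exists_isMaxOn (by simp)
    (Complex.continuous_re.comp hs).continuousOn
  obtain ⟨t2, ht2, hmin⟩ := (isCompact_Icc (a := (0 : ℝ)) (b := 1)).exists_isMinOn (by simp)
    (Complex.continuous_re.comp hs).continuousOn
  have hre' : ∀ t ∈ Icc (0 : ℝ) 1, (S t).re = (s t).re := by
    intro t ht
    rw [hre]
    rcases ht.2.lt_or_eq with h1 | h1
    · rw [Int.fract_eq_self.2 ⟨ht.1, h1⟩]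
    · rw [h1]; simp [h]
  have hM : ∀ t, (S t).re ≤ (S t1).re := by
    intro t
    rw [hre t, hre' t1 ht1]
    exact hmax ⟨Int.fract_nonneg _, (Int.fract_lt_one _).le⟩
  have hm : ∀ t, (S t2).re ≤ (S t).re := by
    intro t
    rw [hre t, hre' t2 ht2]
    exact hmin ⟨Int.fract_nonneg _, (Int.fract_lt_one _).le⟩
  have hslit : ∀ z : ℂ, z ≠ 0 → 0 ≤ z.re → z ∈ slitPlane := by
    intro z hz hz'
    rw [Complex.mem_slitPlane_iff]
    by_cases h1 : z.im = 0
    · left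
      rcases hz'.lt_or_eq with h2 | h2
      · exact h2
      · exact absurd (Complex.ext h2.symm h1) hz
    · exact Or.inr h1
  have key : ∀ (t : ℝ) (e : ℂ), e ≠ 0 → (∀ t', 0 ≤ (e * Q (t, t')).re) →
      Λ (t, t + 1) - Λ (t, t - 1) = log (e * Q (t, t + 1)) - log (e * Q (t, t - 1)) := by
    intro t e he hp
    have hne : ∀ t', e * Q (t, t') ≠ 0 := fun t' => mul_ne_zero he (hQ0 _)
    have := log_unique (isPreconnected_univ) (F := fun t' : ℝ => Λ (t, t') - Λ (t, t - 1))
      (G := fun t' => log (e * Q (t, t')) - log (e * Q (t, t - 1))) ?_ ?_ ?_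
      (mem_univ (t - 1)) (by simp) (t + 1) (mem_univ _)
    · exact this
    · apply Continuous.continuousOn; fun_prop
    · apply Continuous.continuousOn
      refine Continuous.sub (Continuous.clog (by fun_prop) fun t' => hslit _ (hne t') (hp t'))
        continuous_const
    · intro x _
      simp only [Complex.exp_sub, hΛ, Complex.exp_log (hne _)]
      rw [mul_div_mul_left _ _ he]
  have k1 := key t1 (-1) (by norm_num) (by
    intro t'
    have := hM t'
    simp [Q]; linarith)
  have k2 := key t2 1 (by norm_num) (by
    intro t'
    have := hm t'
    simp [Q]; linarith)
  have k3 := hconst t1 t2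
  rw [k1, k2, hQp, hQm, hQp, hQm] at k3
  have e1 : (-1 : ℂ) * (((2 * Real.pi * (n - 1) : ℝ) : ℂ) * I) = ((2 * Real.pi * (n - 1) : ℝ) : ℂ) * (-I) := by
    ring
  have e2 : (-1 : ℂ) * (((2 * Real.pi * (n + 1) : ℝ) : ℂ) * (-I)) = ((2 * Real.pi * (n + 1) : ℝ) : ℂ) * I := by
    ring
  rw [e1, e2, one_mul, one_mul, Complex.log_ofReal_mul p1 (by simp),
    Complex.log_ofReal_mul p2 (by simp), Complex.log_ofReal_mul p1 (by simp),
    Complex.log_ofReal_mul p2 (by simp), Complex.log_I, Complex.log_neg_I] at k3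
  have k4 := congrArg Complex.im k3
  simp at k4
  linarith

theorem two_pi_norm {w : ℂ} : (∃ j : ℤ, j ≠ 0 ∧ w = 2 * Real.pi * I * j) ↔ exp w = 1 ∧ 1 ≤ ‖w‖ := by
  rw [Complex.exp_eq_one_iff]
  constructor
  · rintro ⟨j, hj, rfl⟩
    refine ⟨⟨j, by ring⟩, ?_⟩
    have h1 : (1 : ℝ) ≤ |(j : ℝ)| := by exact_mod_cast Int.one_le_abs hj
    have h2 : ‖(2 * Real.pi * I * j : ℂ)‖ = 2 * Real.pi * |(j : ℝ)| := by
      simp [abs_of_pos Real.pi_pos]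
    rw [h2]
    nlinarith [Real.pi_gt_three]
  · rintro ⟨⟨j, rfl⟩, h⟩
    refine ⟨j, ?_, by ring⟩
    rintro rfl
    simp at h
    linarith

theorem min_pair (s : ℝ → ℂ) (hs : Continuous s) (n : ℤ) (hn : n ≠ 0)
    (h : s 1 - s 0 = 2 * Real.pi * I * n) :
    ∃ s' : ℝ → ℂ, Continuous s' ∧ s' 1 - s' 0 = 2 * Real.pi * I ∧
      (∀ t ∈ Icc (0 : ℝ) 1, ∃ t' ∈ Icc (0 : ℝ) 1, s' t = s t') ∧
      ∀ a ∈ Icc (0 : ℝ) 1, ∀ b ∈ Icc (0 : ℝ) 1, a < b → ∀ j : ℤ, j ≠ 0 →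
        s' b - s' a = 2 * Real.pi * I * j → a = 0 ∧ b = 1 := by
  let P : Set (ℝ × ℝ) := (Icc 0 1 ×ˢ Icc 0 1) ∩
    {p | exp (s p.2 - s p.1) = 1 ∧ 1 ≤ ‖s p.2 - s p.1‖}
  have hPc : IsCompact P := by
    refine (isCompact_Icc.prod isCompact_Icc).inter_right (IsClosed.inter ?_ ?_)
    · exact isClosed_eq (f := fun p : ℝ × ℝ => exp (s p.2 - s p.1)) (by fun_prop) continuous_const
    · exact isClosed_le (g := fun p : ℝ × ℝ => ‖s p.2 - s p.1‖) continuous_const (by fun_prop)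
  have hPne : P.Nonempty := ⟨(0, 1), by simp, two_pi_norm.1 ⟨n, hn, h⟩⟩
  obtain ⟨⟨a, b⟩, hab, hmin⟩ := hPc.exists_isMinOn hPne
    (f := fun p : ℝ × ℝ => |p.2 - p.1|) (by fun_prop)
  have hmin' : ∀ c ∈ Icc (0 : ℝ) 1, ∀ d ∈ Icc (0 : ℝ) 1, ∀ j : ℤ, j ≠ 0 →
      s d - s c = 2 * Real.pi * I * j → |b - a| ≤ |d - c| := by
    intro c hc d hd j hj he
    exact hmin (show (c, d) ∈ P from ⟨⟨hc, hd⟩, two_pi_norm.1 ⟨j, hj, he⟩⟩)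
  obtain ⟨⟨ha, hb⟩, hexp⟩ := hab
  obtain ⟨j, hj, hje⟩ := two_pi_norm.2 hexp
  change a ∈ Icc (0 : ℝ) 1 at ha
  change b ∈ Icc (0 : ℝ) 1 at hb
  change s b - s a = _ at hje
  clear hmin hexp hPne hPc
  wlog hjp : 0 < j generalizing a b j
  · refine this b a ?_ (-j) (neg_ne_zero.2 hj) hb ha ?_ (by omega)
    · rwa [abs_sub_comm] at hmin'
    · push_cast; linear_combination -hje
  have hne : b - a ≠ 0 := by
    intro h0
    have : b = a := by linarith
    rw [this, sub_self] at hje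
    have := hje.symm
    simp [hj, Real.pi_ne_zero] at this
  have hpos : 0 < |b - a| := abs_pos.2 hne
  have hmem : ∀ t ∈ Icc (0 : ℝ) 1, a + t * (b - a) ∈ Icc (0 : ℝ) 1 := by
    intro t ht
    have := (convex_Icc (0 : ℝ) 1) ha hb (sub_nonneg.2 ht.2) ht.1 (by ring)
    simp only [smul_eq_mul] at this
    convert this using 1; ring
  have hpair : ∀ c ∈ Icc (0 : ℝ) 1, ∀ d ∈ Icc (0 : ℝ) 1, ∀ j : ℤ, j ≠ 0 →
      s (a + d * (b - a)) - s (a + c * (b - a)) = 2 * Real.pi * I * j → 1 ≤ |d - c| := by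
    intro c hc d hd k hk he
    have := hmin' _ (hmem c hc) _ (hmem d hd) k hk he
    have e : a + d * (b - a) - (a + c * (b - a)) = (d - c) * (b - a) := by ring
    rw [e, abs_mul] at this
    exact le_of_mul_le_mul_right (by linarith) hpos
  have hj1 : j = 1 := by
    by_contra hj1
    obtain ⟨c, hc, d, hd, k, hk, he⟩ := chord (fun t => s (a + t * (b - a))) (by fun_prop) j
      (by omega) (by simp only [one_mul, zero_mul, add_zero]; rw [← hje]; ring_nf)
    have := hpair c ⟨hc.1, hc.2.le⟩ d ⟨hd.1, hd.2.le⟩ k hk he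
    have h2 : |d - c| < 1 := abs_lt.2 ⟨by linarith [hc.2, hd.1], by linarith [hc.1, hd.2]⟩
    linarith
  subst hj1
  refine ⟨fun t => s (a + t * (b - a)), by fun_prop, ?_, fun t ht => ⟨_, hmem t ht, rfl⟩, ?_⟩
  · simp only [one_mul, zero_mul, add_zero, add_sub_cancel]
    simpa using hje
  · intro c hc d hd hcd k hk he
    have := hpair c hc d hd k hk he
    rw [abs_of_pos (by linarith)] at this
    constructor <;> linarith [hc.1, hd.2]

end LFP

namespace LFP
open Complex Set Topology

theorem exp_I_iter (m : ℕ) (hm : 1 ≤ m) : exp (m * I) ≠ 1 := by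
  intro h
  rw [Complex.exp_eq_one_iff] at h
  obtain ⟨k, hk⟩ := h
  have h1 := congrArg Complex.im hk
  simp at h1
  have hk0 : k ≠ 0 := by
    rintro rfl
    simp at h1; omega
  have : Irrational ((k : ℝ) * (2 * Real.pi)) := by
    have h2 : Irrational ((2 * k : ℤ) * Real.pi) := irrational_pi.intCast_mul (by omega)
    convert h2 using 1; push_cast; ring
  rw [← h1] at this
  exact this.ne_nat m rfl

theorem rot_map (X : Set ℂ) (u : ℂ) (hu : u ∉ X) (s : ℝ → ℂ) (hs : Continuous s)
    (n : ℤ) (hn : n ≠ 0) (h : s 1 - s 0 = 2 * Real.pi * I * n)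
    (hX : ∀ t ∈ Icc (0 : ℝ) 1, u + exp (s t) ∈ X) :
    ∃ f : ↥X → ↥X, Continuous f ∧ (∀ x, ∃ t ∈ Icc (0 : ℝ) 1, (f x : ℂ) = u + exp (s t)) ∧
      ∀ x m, 1 ≤ m → f^[m] x ≠ x := by
  obtain ⟨s1, hs1, h1, himg1, hpair⟩ := min_pair s hs n hn h
  obtain ⟨s2, hs2, h20, h21, himg2, hfib2⟩ := arc_red s1 hs1
  obtain ⟨s3, hs3, h30, h31, himg3, hfib⟩ : ∃ s3 : ℝ → ℂ, Continuous s3 ∧ s3 0 = s1 0 ∧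
      s3 1 = s1 1 ∧ (∀ t ∈ Icc (0 : ℝ) 1, ∃ t' ∈ Icc (0 : ℝ) 1, s3 t = s1 t') ∧
      ∀ a b c, 0 ≤ a → a ≤ c → c ≤ b → b ≤ 1 → s3 a = s3 b → s3 c = s3 a := by
    have hcl : ∀ t ∈ Icc (0 : ℝ) 1, max 0 (min t 1) = t := by
      intro t ht; rw [min_eq_left ht.2, max_eq_right ht.1]
    refine ⟨fun t => s2 (max 0 (min t 1)), ?_, ?_, ?_, ?_, ?_⟩
    · refine hs2.comp_continuous (by fun_prop) fun t => ⟨le_max_left _ _, ?_⟩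
      exact max_le zero_le_one (min_le_right _ _)
    · simp [h20]
    · simp [h21]
    · intro t ht; simp only [hcl t ht]; exact himg2 t ht
    · intro a b c ha hac hcb hb
      simp only [hcl a ⟨ha, by linarith⟩, hcl b ⟨by linarith, hb⟩, hcl c ⟨by linarith, by linarith⟩]
      exact hfib2 a b c ha hac hcb hb
  rw [← h30, ← h31] at h1
  have h01 : s3 0 ≠ s3 1 := by
    intro h0
    rw [h0, sub_self] at h1
    simp [Real.pi_ne_zero] at h1
  obtain ⟨φ, hφ, hφ0, hφ1, hφm, hφeq⟩ := exists_phi s3 hs3 hfib h01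
  have hφeq' : ∀ a ∈ Icc (0 : ℝ) 1, ∀ b ∈ Icc (0 : ℝ) 1, (φ a = φ b ↔ s3 a = s3 b) := by
    intro a ha b hb
    rcases le_total a b with hab | hab
    · exact hφeq a b ha.1 hab hb.2
    · rw [eq_comm, hφeq b a hb.1 hab ha.2, eq_comm]
  have m0 : (0 : ℝ) ∈ Icc (0 : ℝ) 1 := by simp
  have m1 : (1 : ℝ) ∈ Icc (0 : ℝ) 1 := by simp
  have hφr : ∀ a ∈ Icc (0 : ℝ) 1, φ a ∈ Icc (0 : ℝ) 1 := by
    intro a ha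
    exact ⟨hφ0 ▸ hφm 0 a le_rfl ha.1 ha.2, hφ1 ▸ hφm a 1 ha.1 ha.2 le_rfl⟩
  -- the key trichotomy
  have key : ∀ a ∈ Icc (0 : ℝ) 1, ∀ b ∈ Icc (0 : ℝ) 1, exp (s3 a) = exp (s3 b) →
      s3 a = s3 b ∨ (s3 a = s3 0 ∧ s3 b = s3 1) ∨ (s3 a = s3 1 ∧ s3 b = s3 0) := by
    intro a ha b hb he
    rw [Complex.exp_eq_exp_iff_exists_int] at he
    obtain ⟨j, hj⟩ := he
    by_cases hj0 : j = 0
    · left; rw [hj, hj0]; simp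
    right
    obtain ⟨a', ha', ea⟩ := himg3 a ha
    obtain ⟨b', hb', eb⟩ := himg3 b hb
    rw [ea, eb] at hj
    rcases lt_trichotomy a' b' with hlt | heq | hlt
    · obtain ⟨e0, e1⟩ := hpair a' ha' b' hb' hlt (-j) (by omega)
        (by rw [hj]; push_cast; ring)
      left; rw [ea, eb, e0, e1, h30, h31]; exact ⟨rfl, rfl⟩
    · exfalso
      rw [heq] at hj
      have : (j : ℂ) * (2 * Real.pi * I) = 0 := by linear_combination -hj
      simp [hj0, Real.pi_ne_zero] at this
    · obtain ⟨e0, e1⟩ := hpair b' hb' a' ha' hlt j hj0 (by rw [hj]; ring)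
      right; rw [ea, eb, e0, e1, h30, h31]; exact ⟨rfl, rfl⟩
  have hx1 : s3 1 = s3 0 + 2 * Real.pi * I := by rw [← h1]; ring
  have hexp01 : exp (s3 0) = exp (s3 1) := by
    rw [hx1, Complex.exp_add, Complex.exp_two_pi_mul_I, mul_one]
  -- loop in X
  have hinX : ∀ t ∈ Icc (0 : ℝ) 1, ∃ t' ∈ Icc (0 : ℝ) 1, s3 t = s t' := by
    intro t ht
    obtain ⟨t', ht', e⟩ := himg3 t ht
    obtain ⟨t'', ht'', e'⟩ := himg1 t' ht'
    exact ⟨t'', ht'', e.trans e'⟩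
  have nI : ‖exp I‖ = 1 := by simpa using Complex.norm_exp_ofReal_mul_I 1
  have hγX : ∀ t : ↥(Icc (0 : ℝ) 1), u + exp (s3 t) ∈ X := by
    intro t
    obtain ⟨t', ht', e⟩ := hinX t t.2
    rw [e]; exact hX t' ht'
  let γ : C(↥(Icc (0 : ℝ) 1), ↥X) := ⟨fun t => ⟨u + exp (s3 t), hγX t⟩, by fun_prop⟩
  let c : C(↥(Icc (0 : ℝ) 1), ↥(Metric.sphere (0 : ℂ) 1)) := ⟨fun t => ⟨exp (2 * Real.pi * φ t * I), by
    rw [mem_sphere_zero_iff_norm]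
    have : (2 * Real.pi * φ t * I : ℂ) = ((2 * Real.pi * φ t : ℝ) : ℂ) * I := by push_cast; rfl
    rw [this, Complex.norm_exp_ofReal_mul_I]⟩, by fun_prop⟩
  have hcsurj : Function.Surjective c := by
    rintro ⟨z, hz⟩
    rw [mem_sphere_zero_iff_norm] at hz
    have hz0 : z ≠ 0 := by rintro rfl; simp at hz
    let θ := Int.fract (arg z / (2 * Real.pi))
    have hθ : θ ∈ Icc (φ 0) (φ 1) := by
      rw [hφ0, hφ1]; exact ⟨Int.fract_nonneg _, (Int.fract_lt_one _).le⟩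
    obtain ⟨t, ht, hte⟩ := intermediate_value_Icc zero_le_one hφ.continuousOn hθ
    refine ⟨⟨t, ht⟩, Subtype.ext ?_⟩
    show exp (2 * Real.pi * φ t * I) = z
    rw [hte]
    have e : (θ : ℂ) = arg z / (2 * Real.pi) - (⌊arg z / (2 * Real.pi)⌋ : ℂ) := by
      have : θ = arg z / (2 * Real.pi) - ⌊arg z / (2 * Real.pi)⌋ := rfl
      rw [this]; push_cast; rfl
    have hpi : (Real.pi : ℂ) ≠ 0 := by exact_mod_cast Real.pi_ne_zero
    have e2 : (2 * Real.pi * θ * I : ℂ) = arg z * I - ⌊arg z / (2 * Real.pi)⌋ * (2 * Real.pi * I) := by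
      rw [e]; field_simp
    rw [e2, Complex.exp_sub, Complex.exp_int_mul_two_pi_mul_I, div_one]
    have := Complex.norm_mul_exp_arg_mul_I z
    rw [hz] at this; simpa using this
  have hcγ : ∀ a b : ↥(Icc (0 : ℝ) 1), c a = c b → γ a = γ b := by
    intro a b hab
    have h2 : exp (2 * Real.pi * φ a * I) = exp (2 * Real.pi * φ b * I) := congrArg Subtype.val hab
    apply Subtype.ext
    show u + exp (s3 a) = u + exp (s3 b)
    congr 1
    rw [Complex.exp_eq_exp_iff_exists_int] at h2
    obtain ⟨j, hj⟩ := h2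
    have hj2 : φ a = φ b + j := by
      have hpi : (Real.pi : ℂ) ≠ 0 := by exact_mod_cast Real.pi_ne_zero
      have h3 : (2 * Real.pi * I : ℂ) * (φ a) = (2 * Real.pi * I) * (φ b + j) := by
        linear_combination hj
      have h4 := mul_left_cancel₀ (by simp [Real.pi_ne_zero]) h3
      exact_mod_cast h4
    have ra := hφr a a.2
    have rb := hφr b b.2
    have j1 : (j : ℝ) ≤ 1 := by linarith [ra.2, rb.1]
    have j2 : (-1 : ℝ) ≤ j := by linarith [ra.1, rb.2]
    have j1' : j ≤ 1 := by exact_mod_cast j1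
    have j2' : -1 ≤ j := by exact_mod_cast j2
    have : j = -1 ∨ j = 0 ∨ j = 1 := by omega
    rcases this with rfl | rfl | rfl
    · push_cast at hj2
      have e1 : φ a = φ 0 := by rw [hφ0]; linarith [ra.1, rb.2]
      have e2 : φ b = φ 1 := by rw [hφ1]; linarith [ra.1, rb.2]
      rw [(hφeq' a a.2 0 m0).1 e1, (hφeq' b b.2 1 m1).1 e2, hexp01]
    · have e1 : φ a = φ b := by simpa using hj2
      rw [(hφeq' a a.2 b b.2).1 e1]
    · push_cast at hj2
      have e1 : φ a = φ 1 := by rw [hφ1]; linarith [ra.2, rb.1]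
      have e2 : φ b = φ 0 := by rw [hφ0]; linarith [ra.2, rb.1]
      rw [(hφeq' a a.2 1 m1).1 e1, (hφeq' b b.2 0 m0).1 e2, hexp01]
  have hcq : IsQuotientMap c := c.continuous.isClosedMap.isQuotientMap c.continuous hcsurj
  let g : C(↥(Metric.sphere (0 : ℂ) 1), ↥X) := hcq.lift γ hcγ
  have hg : ∀ t, g (c t) = γ t := fun t => DFunLike.congr_fun (hcq.lift_comp γ hcγ) t
  -- the logarithm on the loop
  let γ' : C(↥(Icc (0 : ℝ) 1), ↥(range γ)) := ⟨rangeFactorization γ, by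
    exact γ.continuous.subtype_mk _⟩
  have hγq : IsQuotientMap γ' := γ'.continuous.isClosedMap.isQuotientMap γ'.continuous
    rangeFactorization_surjective
  let ℓ : C(↥(Icc (0 : ℝ) 1), ℂ) := ⟨fun t => s3 t - 2 * Real.pi * φ t * I, by fun_prop⟩
  have hℓ : ∀ a b : ↥(Icc (0 : ℝ) 1), γ' a = γ' b → ℓ a = ℓ b := by
    intro a b hab
    have h2 : γ a = γ b := congrArg Subtype.val hab
    have h3 : u + exp (s3 a) = u + exp (s3 b) := congrArg Subtype.val h2
    show s3 a - 2 * Real.pi * φ a * I = s3 b - 2 * Real.pi * φ b * I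
    rcases key a a.2 b b.2 (add_left_cancel h3) with e | ⟨e1, e2⟩ | ⟨e1, e2⟩
    · rw [e, (hφeq' a a.2 b b.2).2 e]
    · rw [(hφeq' a a.2 0 m0).2 e1, (hφeq' b b.2 1 m1).2 e2, e1, e2, hφ0, hφ1, hx1]
      push_cast; ring
    · rw [(hφeq' a a.2 1 m1).2 e1, (hφeq' b b.2 0 m0).2 e2, e1, e2, hφ0, hφ1, hx1]
      push_cast; ring
  let L0 : C(↥(range γ), ℂ) := hγq.lift ℓ hℓ
  have hL0 : ∀ t, L0 (γ' t) = ℓ t := fun t => DFunLike.congr_fun (hγq.lift_comp ℓ hℓ) t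
  have hcl : IsClosed (range γ) := (isCompact_range γ.continuous).isClosed
  obtain ⟨L, hL⟩ := ContinuousMap.exists_restrict_eq hcl L0
  have hLγ : ∀ t, L (γ t) = ℓ t := by
    intro t
    rw [← hL0 t, ← hL]; rfl
  let w : ↥X → ℂ := fun x => ((x : ℂ) - u) * exp (-L x)
  have hwc : Continuous w := by fun_prop
  have hw0 : ∀ x, w x ≠ 0 := by
    intro x
    refine mul_ne_zero (sub_ne_zero.2 ?_) (Complex.exp_ne_zero _)
    rintro h0
    exact hu (h0 ▸ x.2)
  have hwγ : ∀ t, w (γ t) = c t := by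
    intro t
    show (u + exp (s3 t) - u) * exp (-L (γ t)) = exp (2 * Real.pi * φ t * I)
    rw [hLγ]
    show (u + exp (s3 t) - u) * exp (-(s3 t - 2 * Real.pi * φ t * I)) = _
    rw [add_sub_cancel_left, ← Complex.exp_add]
    congr 1; ring
  let k : ↥X → ↥(Metric.sphere (0 : ℂ) 1) := fun x => ⟨exp I * (w x / ‖w x‖), by
    rw [mem_sphere_zero_iff_norm, norm_mul, norm_div, nI]
    simp [hw0 x]⟩
  have hkc : Continuous k := by
    refine Continuous.subtype_mk ?_ _
    refine continuous_const.mul (hwc.div (by fun_prop) fun x => ?_)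
    simp [hw0 x]
  let ρ : ↥(Metric.sphere (0 : ℂ) 1) → ↥(Metric.sphere (0 : ℂ) 1) := fun z => ⟨exp I * z, by
    have := z.2
    rw [mem_sphere_zero_iff_norm] at this ⊢
    rw [norm_mul, this, nI, one_mul]⟩
  have hkg : ∀ z, k (g z) = ρ z := by
    intro z
    obtain ⟨t, rfl⟩ := hcsurj z
    rw [hg]
    apply Subtype.ext
    show exp I * (w (γ t) / ‖w (γ t)‖) = exp I * (c t : ℂ)
    have := (c t).2
    rw [mem_sphere_zero_iff_norm] at this
    rw [hwγ, this]; simp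
  refine ⟨g ∘ k, g.continuous.comp hkc, ?_, ?_⟩
  · intro x
    obtain ⟨t, ht⟩ := hcsurj (k x)
    obtain ⟨t', ht', e⟩ := hinX t t.2
    refine ⟨t', ht', ?_⟩
    show ((g (k x) : ↥X) : ℂ) = _
    rw [← ht, hg, ← e]; rfl
  · intro x m hm hfix
    have hsc : Function.Semiconj k (g ∘ k) ρ := fun x => hkg (k x)
    have h5 := (hsc.iterate_right m) x
    rw [hfix] at h5
    have h6 : ∀ (m : ℕ) (z : ↥(Metric.sphere (0 : ℂ) 1)), ((ρ^[m] z : ↥(Metric.sphere (0 : ℂ) 1)) : ℂ) = exp (m * I) * z := by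
      intro m
      induction m with
      | zero => intro z; simp
      | succ m ih =>
        intro z
        rw [Function.iterate_succ_apply, ih]
        show exp (m * I) * (exp I * z) = _
        rw [← mul_assoc, ← Complex.exp_add]
        congr 2; push_cast; ring
    have h7 := h6 m (k x)
    rw [← h5] at h7
    have hk0 : ((k x : ↥(Metric.sphere (0 : ℂ) 1)) : ℂ) ≠ 0 := by
      have := (k x).2
      rw [mem_sphere_zero_iff_norm] at this
      intro h0; rw [h0] at this; simp at this
    exact exp_I_iter m hm (mul_right_cancel₀ hk0 (by rw [one_mul]; exact h7.symm))

end LFP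

namespace LFP
open Complex Set Topology

theorem borsuk (O A : Set ℂ) (u : ℂ) (hu : u ∈ O) (hb : Bornology.IsBounded O)
    (hA : IsClosed A) (hfr : frontier O ⊆ A) (L : ℂ → ℂ) (hL : ContinuousOn L A)
    (he : ∀ z ∈ A, exp (L z) = z - u) : False := by
  classical
  obtain ⟨M, hM⟩ := ContinuousMap.exists_restrict_eq hA (⟨A.domRestrict L, hL.domRestrict⟩ : C(A, ℂ))
  have hM' : ∀ z ∈ A, M z = L z := fun z hz => DFunLike.congr_fun hM ⟨z, hz⟩
  obtain ⟨G, hG, hGe⟩ := glog (fun z => if z ∈ O then exp (M z) else z - u) (by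
    apply continuous_if
    · intro z hz
      have := hfr hz
      rw [hM' z this, he z this]
    · exact (Continuous.continuousOn (by fun_prop))
    · exact (Continuous.continuousOn (by fun_prop))) (by
    intro z
    show (if z ∈ O then exp (M z) else z - u) ≠ 0
    split_ifs with h
    · exact exp_ne_zero _
    · intro h0; rw [sub_eq_zero] at h0; exact h (h0 ▸ hu))
  obtain ⟨R, hR0, hR⟩ := hb.subset_ball_lt 0 u
  have hz : ∀ t : ℝ, exp (G (u + R * exp (t * I))) = R * exp (t * I) := by
    intro t
    rw [hGe]
    have : u + R * exp (t * I) ∉ O := by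
      intro h
      have := hR h
      rw [Metric.mem_ball, dist_eq_norm, add_sub_cancel_left, norm_mul,
        Complex.norm_exp_ofReal_mul_I, Complex.norm_real, mul_one, Real.norm_of_nonneg hR0.le] at this
      exact lt_irrefl _ this
    simp [this]
  have h1 := log_unique (s := (univ : Set ℝ)) isPreconnected_univ
    (F := fun t => G (u + R * exp (t * I)) - t * I)
    (G := fun t => G (u + R * exp ((0 : ℝ) * I)))
    (Continuous.continuousOn (by fun_prop)) (Continuous.continuousOn (by fun_prop))
    (by
      intro t _
      show exp (G (u + R * exp (t * I)) - t * I) = exp (G (u + R * exp ((0 : ℝ) * I)))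
      rw [Complex.exp_sub, hz, hz, mul_div_assoc, div_self (exp_ne_zero _)]
      simp) (mem_univ 0) (by simp) (2 * Real.pi) (mem_univ _)
  simp [Real.pi_ne_zero] at h1

theorem log_or_loop_conn {A : Type*} [TopologicalSpace A] [PathConnectedSpace A]
    [LocallyPathConnectedSpace A] (g : A → ℂ) (hg : Continuous g) (h0 : ∀ a, g a ≠ 0)
    (hno : ¬ ∃ s : ℝ → ℂ, Continuous s ∧ ∃ n : ℤ, n ≠ 0 ∧ s 1 - s 0 = 2 * Real.pi * I * n ∧
      ∀ t ∈ Icc (0 : ℝ) 1, ∃ a, exp (s t) = g a) :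
    ∃ L : A → ℂ, Continuous L ∧ ∀ a, exp (L a) = g a := by
  obtain ⟨a0⟩ : Nonempty A := inferInstance
  let f : C(A, {z : ℂ // z ≠ 0}) := ⟨fun a => ⟨g a, h0 a⟩, by fun_prop⟩
  have he0 : (⟨exp (log (g a0)), exp_ne_zero _⟩ : {z : ℂ // z ≠ 0}) = f a0 :=
    Subtype.ext (exp_log (h0 a0))
  obtain ⟨F, ⟨_, hF⟩, _⟩ := Complex.isCoveringMap_exp.isLocalHomeomorph.existsUnique_continuousMap_lifts
    f a0 (log (g a0)) he0 (by
      intro γ hγ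
      obtain ⟨Γ, h1, h2⟩ := Complex.isCoveringMap_exp.exists_path_lifts (f.comp γ) (log (g a0)) (by
        rw [he0, ← hγ]; rfl)
      exact ⟨Γ, h2, h1⟩) (by
      intro γ γ' Γ Γ' hγ hγ' hΓ hΓ' e e' h1
      have eΓ : ∀ t, exp (Γ t) = g (γ t) := fun t => congrArg Subtype.val (congrFun e t)
      have eΓ' : ∀ t, exp (Γ' t) = g (γ' t) := fun t => congrArg Subtype.val (congrFun e' t)
      have h2 : exp (Γ' 1) = exp (Γ 1) := by rw [eΓ, eΓ', h1]
      rw [Complex.exp_eq_exp_iff_exists_int] at h2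
      obtain ⟨n, hn⟩ := h2
      by_cases hn0 : n = 0
      · rw [hn, hn0]; simp
      exfalso
      apply hno
      let pr := projIcc (0 : ℝ) 1 zero_le_one
      have hpr : Continuous pr := continuous_projIcc
      refine ⟨fun t => if t ≤ 1 / 2 then Γ (pr (1 - 2 * t)) else Γ' (pr (2 * t - 1)), ?_, n, hn0, ?_, ?_⟩
      · apply Continuous.if_le <;> try fun_prop
        intro t ht
        subst ht
        norm_num [pr]
        rw [hΓ, hΓ']
      · have e1 : pr 1 = 1 := projIcc_right _
        norm_num
        rw [e1, hn]; ring
      · intro t _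
        by_cases h : t ≤ 1 / 2
        · simp only [h, if_true]; exact ⟨_, eΓ _⟩
        · simp only [h, if_false]; exact ⟨_, eΓ' _⟩)
  exact ⟨F, F.continuous, fun a => congrArg Subtype.val (congrFun hF a)⟩

theorem log_or_loop {A : Type*} [TopologicalSpace A]
    [LocallyPathConnectedSpace A] (g : A → ℂ) (hg : Continuous g) (h0 : ∀ a, g a ≠ 0)
    (hno : ¬ ∃ s : ℝ → ℂ, Continuous s ∧ ∃ n : ℤ, n ≠ 0 ∧ s 1 - s 0 = 2 * Real.pi * I * n ∧
      ∀ t ∈ Icc (0 : ℝ) 1, ∃ a, exp (s t) = g a) :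
    ∃ L : A → ℂ, Continuous L ∧ ∀ a, exp (L a) = g a := by
  have h1 : ∀ a0 : A, ∃ L : A → ℂ, ContinuousOn L (pathComponent a0) ∧
      ∀ a ∈ pathComponent a0, exp (L a) = g a := by
    intro a0
    classical
    have : PathConnectedSpace (pathComponent a0) :=
      isPathConnected_iff_pathConnectedSpace.1 isPathConnected_pathComponent
    have : LocallyPathConnectedSpace (pathComponent a0) :=
      (IsOpen.pathComponent a0).locallyPathConnectedSpace
    obtain ⟨L, hL, he⟩ := log_or_loop_conn (fun a : pathComponent a0 => g a) (by fun_prop)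
      (fun a => h0 a) (by
        rintro ⟨s, hs, n, hn, h, ht⟩
        refine hno ⟨s, hs, n, hn, h, fun t h't => ?_⟩
        obtain ⟨a, ha⟩ := ht t h't
        exact ⟨a, ha⟩)
    refine ⟨fun a => if h : a ∈ pathComponent a0 then L ⟨a, h⟩ else 0, ?_, ?_⟩
    · rw [continuousOn_iff_continuous_domRestrict]
      convert hL using 1
      ext x
      simp only [domRestrict_apply, dif_pos x.2]
    · intro a ha
      simp only [dif_pos ha]; exact he _
  choose L hL he using h1
  let r : A → A := fun a => Quotient.out (Quotient.mk (pathSetoid A) a)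
  have hr : ∀ a, Joined (r a) a := fun a => Quotient.mk_out (s := pathSetoid A) a
  have hr2 : ∀ a b, Joined a b → r a = r b := by
    intro a b h
    have : Quotient.mk (pathSetoid A) a = Quotient.mk (pathSetoid A) b := Quotient.sound h
    simp only [r, this]
  refine ⟨fun a => L (r a) a, ?_, fun a => he (r a) a (hr a)⟩
  rw [continuous_iff_continuousAt]
  intro a
  have hn : pathComponent (r a) ∈ 𝓝 a := (IsOpen.pathComponent (r a)).mem_nhds (hr a)
  refine ((hL (r a)).continuousAt hn).congr ?_
  filter_upwards [hn] with b hb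
  rw [hr2 a b ((hr a).symm.trans hb)]

end LFP

namespace LFP
open Complex Set Topology

theorem frontier_comp (X : Set ℂ) (hX : IsClosed X) (u : ℂ) :
    frontier (connectedComponentIn Xᶜ u) ⊆ X := by
  intro z hz
  by_contra hzX
  have ho := hX.isOpen_compl.connectedComponentIn (x := u)
  have ho' := hX.isOpen_compl.connectedComponentIn (x := z)
  have hzz : z ∈ connectedComponentIn Xᶜ z := mem_connectedComponentIn hzX
  obtain ⟨w, hw1, hw2⟩ := mem_closure_iff.1 (frontier_subset_closure hz) _ ho' hzz
  have e : connectedComponentIn Xᶜ z = connectedComponentIn Xᶜ u :=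
    (connectedComponentIn_eq hw1).trans (connectedComponentIn_eq hw2).symm
  rw [e] at hzz
  rw [ho.frontier_eq] at hz
  exact hz.2 hzz

theorem nsh (X : Set ℂ) (hX : IsCompact X) (hlc : LocallyConnectedSpace ↥X)
    (h : HasWLPPP ↥X) (p : ↥X) :
    ∃ ε > 0, ∀ u ∉ X, ¬ connectedComponentIn Xᶜ u ⊆ Metric.ball (p : ℂ) ε := by
  classical
  obtain ⟨𝓑, hb, hB⟩ := h
  obtain ⟨B, hB𝓑, hpB, -⟩ := hb.exists_subset_of_mem_open (mem_univ p) isOpen_univ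
  have hBo := hb.isOpen hB𝓑
  obtain ⟨ε, hε, hεB⟩ := Metric.isOpen_iff.1 hBo p hpB
  refine ⟨ε / 2, by positivity, fun u hu hO => ?_⟩
  have : CompactSpace ↥X := isCompact_iff_compactSpace.1 hX
  have : LocallyPathConnectedSpace ↥X := lpc
  have : LocallyPathConnectedSpace ↥B := hBo.locallyPathConnectedSpace
  by_cases hs : ∃ s : ℝ → ℂ, Continuous s ∧ ∃ n : ℤ, n ≠ 0 ∧ s 1 - s 0 = 2 * Real.pi * I * n ∧
      ∀ t ∈ Icc (0 : ℝ) 1, ∃ a : ↥B, exp (s t) = ((a : ↥X) : ℂ) - u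
  · obtain ⟨s, hs, n, hn, h, ht⟩ := hs
    obtain ⟨f, hf, hfB, hper⟩ := rot_map X u hu s hs n hn h (by
      intro t h't
      obtain ⟨a, ha⟩ := ht t h't
      rw [ha, add_sub_cancel]; exact a.1.2)
    obtain ⟨x, -, m, hm, hx⟩ := hB B hB𝓑 f hf (by
      rintro _ ⟨x, -, rfl⟩
      obtain ⟨t, h't, e⟩ := hfB x
      obtain ⟨a, ha⟩ := ht t h't
      rw [ha, add_sub_cancel] at e
      rw [Subtype.ext e]; exact a.2)
    exact hper x m hm hx
  · obtain ⟨L, hL, he⟩ := log_or_loop (fun a : ↥B => ((a : ↥X) : ℂ) - u) (by fun_prop)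
      (fun a h0 => hu (by rw [sub_eq_zero] at h0; rw [← h0]; exact a.1.2)) hs
    have hA : ∀ z ∈ X ∩ Metric.closedBall (p : ℂ) (ε / 2), ∃ hz : z ∈ X, (⟨z, hz⟩ : ↥X) ∈ B := by
      rintro z ⟨hz, hz2⟩
      refine ⟨hz, hεB ?_⟩
      rw [Metric.mem_closedBall] at hz2
      rw [Metric.mem_ball]
      exact lt_of_le_of_lt hz2 (by linarith)
    refine borsuk (connectedComponentIn Xᶜ u) (X ∩ Metric.closedBall (p : ℂ) (ε / 2)) u
      (mem_connectedComponentIn hu) (Metric.isBounded_ball.subset hO)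
      (hX.isClosed.inter Metric.isClosed_closedBall) ?_
      (fun z => if h : ∃ hz : z ∈ X, (⟨z, hz⟩ : ↥X) ∈ B then L ⟨⟨z, h.1⟩, h.2⟩ else 0) ?_ ?_
    · refine subset_inter (frontier_comp X hX.isClosed u) ?_
      refine frontier_subset_closure.trans ((closure_mono hO).trans Metric.closure_ball_subset_closedBall)
    · rw [continuousOn_iff_continuous_domRestrict]
      have : Continuous fun z : ↥(X ∩ Metric.closedBall (p : ℂ) (ε / 2)) =>
          L ⟨⟨z, (hA z z.2).1⟩, (hA z z.2).2⟩ := by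
        refine hL.comp (Continuous.subtype_mk (Continuous.subtype_mk continuous_subtype_val _) _)
      convert this using 1
      ext z
      simp only [domRestrict_apply, dif_pos (hA z z.2)]
    · intro z hz
      simp only [dif_pos (hA z hz)]
      exact he _

end LFP

namespace LFP
open Set Filter Topology

/-- The increasing sets used to build neighbourhoods with property S. -/
def SU {X : Type*} [MetricSpace X] (p : X) (ε : ℝ) : ℕ → Set X
  | 0 => {p}
  | n + 1 => ⋃₀ {G | IsOpen G ∧ IsPreconnected G ∧ (∀ x ∈ G, ∀ y ∈ G, dist x y ≤ ε / 2 / 2 ^ n) ∧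
      (G ∩ SU p ε n).Nonempty}

theorem small_nhd {X : Type*} [MetricSpace X] [LocallyConnectedSpace X] (x : X) {d : ℝ}
    (hd : 0 < d) : ∃ G : Set X, IsOpen G ∧ IsPreconnected G ∧ x ∈ G ∧
      ∀ y ∈ G, ∀ z ∈ G, dist y z ≤ d := by
  obtain ⟨V, h1, h2, h3, h4⟩ :=
    (locallyConnectedSpace_iff_subsets_isOpen_isConnected.1 inferInstance) x _
      (Metric.ball_mem_nhds x (half_pos hd))
  refine ⟨V, h2, h4.isPreconnected, h3, fun y hy z hz => ?_⟩
  have := Metric.mem_ball.1 (h1 hy)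
  have := Metric.mem_ball'.1 (h1 hz)
  linarith [dist_triangle y x z]

theorem propS {X : Type*} [MetricSpace X] [CompactSpace X] [LocallyConnectedSpace X] (p : X)
    {ε : ℝ} (hε : 0 < ε) : ∃ U : Set X, IsOpen U ∧ p ∈ U ∧ IsPreconnected U ∧
      U ⊆ Metric.closedBall p ε ∧ ∀ η > 0, ∃ δ > 0, ∀ x ∈ closure U, ∀ y ∈ closure U,
        dist x y < δ → ∃ M ⊆ closure U, IsPreconnected M ∧ x ∈ M ∧ y ∈ M ∧ ∀ z ∈ M, dist z x < η := by
  have hd : ∀ n : ℕ, 0 < ε / 2 / 2 ^ n := fun n => by positivity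
  have hmono1 : ∀ n, SU p ε n ⊆ SU p ε (n + 1) := by
    intro n x hx
    obtain ⟨G, h1, h2, h3, h4⟩ := small_nhd x (hd n)
    exact mem_sUnion.2 ⟨G, ⟨h1, h2, h4, x, h3, hx⟩, h3⟩
  have hmono : Monotone (SU p ε) := monotone_nat_of_le_succ hmono1
  have hp : ∀ n, p ∈ SU p ε n := fun n => hmono (Nat.zero_le n) (mem_singleton p)
  have hopen : ∀ n, IsOpen (SU p ε (n + 1)) := fun n => isOpen_sUnion fun G hG => hG.1
  have hconn : ∀ n, IsPreconnected (SU p ε n) := by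
    intro n
    induction n with
    | zero => exact isPreconnected_singleton
    | succ n ih =>
      refine isPreconnected_of_forall p fun x hx => ?_
      obtain ⟨G, hG, hxG⟩ := mem_sUnion.1 hx
      refine ⟨G ∪ SU p ε n, union_subset (subset_sUnion_of_mem hG) (hmono1 n), Or.inr (hp n),
        Or.inl hxG, ?_⟩
      obtain ⟨z, hz1, hz2⟩ := hG.2.2.2
      exact hG.2.1.union z hz1 hz2 ih
  let U := ⋃ n, SU p ε n
  have hUn : ∀ n, SU p ε n ⊆ U := fun n => subset_iUnion _ n
  have hUo : IsOpen U := by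
    have : U = ⋃ n, SU p ε (n + 1) := by
      apply Subset.antisymm
      · exact iUnion_subset fun n => (hmono1 n).trans (subset_iUnion (fun n => SU p ε (n + 1)) n)
      · exact iUnion_subset fun n => hUn (n + 1)
    rw [this]
    exact isOpen_iUnion hopen
  have hUc : IsPreconnected U := by
    refine isPreconnected_of_forall p fun x hx => ?_
    obtain ⟨n, hn⟩ := mem_iUnion.1 hx
    exact ⟨_, hUn n, hp n, hn, hconn n⟩
  have key : ∀ k n, ∀ x ∈ SU p ε (n + k), ∃ C ⊆ U, IsPreconnected C ∧ x ∈ C ∧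
      (∃ y ∈ C, y ∈ SU p ε n) ∧ ∀ z ∈ C, dist z x ≤ 2 * (ε / 2 / 2 ^ n) := by
    intro k
    induction k with
    | zero =>
      intro n x hx
      refine ⟨{x}, singleton_subset_iff.2 (hUn _ hx), isPreconnected_singleton, rfl, ⟨x, rfl, hx⟩, ?_⟩
      rintro z rfl
      rw [dist_self]; have := hd n; positivity
    | succ k ih =>
      intro n x hx
      rw [show n + (k + 1) = (n + 1) + k by omega] at hx
      obtain ⟨C, hCU, hC, hxC, ⟨y, hyC, hy⟩, hdC⟩ := ih (n + 1) x hx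
      obtain ⟨G, hG, hyG⟩ := mem_sUnion.1 hy
      obtain ⟨w, hw1, hw2⟩ := hG.2.2.2
      refine ⟨C ∪ G, union_subset hCU ((subset_sUnion_of_mem hG).trans (hUn (n + 1))),
        hC.union y hyC hyG hG.2.1, Or.inl hxC, ⟨w, Or.inr hw1, hw2⟩, ?_⟩
      have e : 2 * (ε / 2 / 2 ^ (n + 1)) = ε / 2 / 2 ^ n := by rw [pow_succ]; field_simp
      rw [e] at hdC
      rintro z (hz | hz)
      · linarith [hdC z hz, hd n]
      · linarith [hdC y hyC, hG.2.2.1 z hz y hyG, dist_triangle z y x]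
  have key' : ∀ n, ∀ x ∈ U, ∃ C ⊆ U, IsPreconnected C ∧ x ∈ C ∧
      (∃ y ∈ C, y ∈ SU p ε n) ∧ ∀ z ∈ C, dist z x ≤ 2 * (ε / 2 / 2 ^ n) := by
    intro n x hx
    obtain ⟨m, hm⟩ := mem_iUnion.1 hx
    exact key m n x (hmono (by omega) hm)
  refine ⟨U, hUo, hUn 0 (hp 0), hUc, ?_, ?_⟩
  · intro x hx
    obtain ⟨C, -, -, -, ⟨y, hyC, hy⟩, hC⟩ := key' 0 x hx
    have hyp : y = p := hy
    have := hC y hyC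
    rw [hyp] at this
    rw [Metric.mem_closedBall']
    norm_num at this
    linarith
  · intro η hη
    obtain ⟨n, hn⟩ : ∃ n : ℕ, 20 * (ε / 2 / 2 ^ n) < η := by
      obtain ⟨n, hn⟩ := exists_pow_lt_of_lt_one (show 0 < η / (10 * ε) by positivity)
        (show (1 / 2 : ℝ) < 1 by norm_num)
      refine ⟨n, ?_⟩
      rw [lt_div_iff₀ (by positivity), one_div, inv_pow] at hn
      calc 20 * (ε / 2 / 2 ^ n) = (2 ^ n)⁻¹ * (10 * ε) := by ring
        _ < η := hn
    set d := ε / 2 / 2 ^ n with hdd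
    have hdpos : 0 < d := hd n
    choose G hGo hGc hGx hGd using fun x : X => small_nhd x hdpos
    obtain ⟨t, ht⟩ := isCompact_univ.elim_finite_subcover G hGo
      (fun x _ => mem_iUnion.2 ⟨x, hGx x⟩)
    let D : X → Set X := fun i => ⋃₀ {C | C ⊆ U ∧ IsPreconnected C ∧ G i ⊆ C ∧
      ∀ z ∈ C, ∀ g ∈ G i, dist z g ≤ 5 * d}
    have hDU : ∀ i, D i ⊆ U := fun i => sUnion_subset fun C hC => hC.1
    have hDc : ∀ i, IsPreconnected (D i) := by
      intro i
      exact isPreconnected_sUnion i _ (fun C hC => hC.2.2.1 (hGx i)) fun C hC => hC.2.1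
    have hDd : ∀ i, ∀ z ∈ D i, dist z i ≤ 5 * d := by
      intro i z hz
      obtain ⟨C, hC, hzC⟩ := mem_sUnion.1 hz
      exact hC.2.2.2 z hzC i (hGx i)
    have hcov : U ⊆ ⋃ i : ↥t, D i := by
      intro x hx
      obtain ⟨C, hCU, hC, hxC, ⟨y, hyC, hy⟩, hdC⟩ := key' n x hx
      obtain ⟨i, hi, hyi⟩ : ∃ i ∈ t, y ∈ G i := by simpa using ht (mem_univ y)
      refine mem_iUnion.2 ⟨⟨i, hi⟩, mem_sUnion.2 ⟨C ∪ G i, ⟨?_, hC.union y hyC hyi (hGc i),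
        subset_union_right, ?_⟩, Or.inl hxC⟩⟩
      · refine union_subset hCU (Subset.trans ?_ (hUn (n + 1)))
        exact subset_sUnion_of_mem ⟨hGo i, hGc i, hGd i, y, hyi, hy⟩
      · rintro z (hz | hz) g hg
        · have a1 := hdC z hz
          have a2 := hdC y hyC
          have a3 := hGd i y hyi g hg
          have a4 := dist_triangle4 z x y g
          rw [dist_comm x y] at a4
          linarith
        · linarith [hGd i z hz g hg]
    have hcov2 : closure U ⊆ ⋃ i : ↥t, closure (D i) := by
      refine closure_minimal (hcov.trans (iUnion_mono fun i => subset_closure)) ?_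
      exact isClosed_iUnion_of_finite fun i => isClosed_closure
    have hDd2 : ∀ i, ∀ z ∈ closure (D i), dist z i ≤ 5 * d := by
      intro i z hz
      have : closure (D i) ⊆ Metric.closedBall i (5 * d) :=
        closure_minimal (fun z hz => hDd i z hz) Metric.isClosed_closedBall
      exact this hz
    have hev : ∀ᶠ δ in 𝓝[>] (0 : ℝ), ∀ i j : ↥t, ∀ x ∈ closure (D i), ∀ y ∈ closure (D j),
        dist x y < δ → (closure (D i) ∩ closure (D j)).Nonempty := by
      rw [eventually_all]; intro i
      rw [eventually_all]; intro j
      by_cases hij : (closure (D i) ∩ closure (D j)).Nonempty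
      · exact Eventually.of_forall fun δ x _ y _ _ => hij
      have hdis : Disjoint (closure (D i)) (closure (D j)) := by
        rw [disjoint_iff_inter_eq_empty]; exact not_nonempty_iff_eq_empty.1 hij
      obtain ⟨δ, hδ, hdis2⟩ := hdis.exists_thickenings isClosed_closure.isCompact isClosed_closure
      filter_upwards [Ioo_mem_nhdsGT hδ] with δ' hδ' x hx y hy hxy
      exfalso
      refine Set.disjoint_left.1 hdis2 (?_ : y ∈ _) (Metric.self_subset_thickening hδ _ hy)
      rw [Metric.mem_thickening_iff]
      exact ⟨x, hx, by rw [dist_comm]; exact hxy.trans hδ'.2⟩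
    obtain ⟨δ, hδ, hδ0⟩ := (hev.and self_mem_nhdsWithin).exists
    refine ⟨δ, hδ0, fun x hx y hy hxy => ?_⟩
    obtain ⟨i, hi⟩ := mem_iUnion.1 (hcov2 hx)
    obtain ⟨j, hj⟩ := mem_iUnion.1 (hcov2 hy)
    obtain ⟨w, hwi, hwj⟩ := hδ i j x hi y hj hxy
    refine ⟨closure (D i) ∪ closure (D j), union_subset (closure_mono (hDU i)) (closure_mono (hDU j)),
      (hDc i).closure.union w hwi hwj (hDc j).closure, Or.inl hi, Or.inr hj, ?_⟩
    have b1 := hDd2 i x hi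
    have b2 := hDd2 i w hwi
    have b3 := hDd2 j w hwj
    rintro z (hz | hz)
    · have := hDd2 i z hz
      linarith [dist_triangle_right z x i.1]
    · have := hDd2 j z hz
      linarith [dist_triangle_right z w j.1, dist_triangle_right w x i.1, dist_triangle z w x]

end LFP

namespace LFP
open Complex Set Topology

theorem compl_ball_preconn (p : ℂ) (r : ℝ) (hr : 0 ≤ r) :
    IsPreconnected (Metric.closedBall p r)ᶜ := by
  have h : (Metric.closedBall p r)ᶜ =
      (fun x : ℝ × ℝ => p + x.1 * exp (x.2 * I)) '' (Ioi r ×ˢ univ) := by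
    ext z
    simp only [mem_compl_iff, Metric.mem_closedBall, not_le, mem_image, mem_prod, mem_Ioi, mem_univ,
      and_true, Prod.exists]
    constructor
    · intro hz
      refine ⟨‖z - p‖, arg (z - p), by rwa [← dist_eq_norm], ?_⟩
      rw [Complex.norm_mul_exp_arg_mul_I]; ring
    · rintro ⟨a, b, hab, rfl⟩
      rw [dist_eq_norm, add_sub_cancel_left, norm_mul, Complex.norm_exp_ofReal_mul_I, mul_one,
        Complex.norm_real, Real.norm_of_nonneg (by linarith)]
      exact hab
  rw [h]
  exact (isPreconnected_Ioi.prod isPreconnected_univ).image _ (Continuous.continuousOn (by fun_prop))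

theorem fill (K : Set ℂ) (hK : IsCompact K) (hKc : IsConnected K) (p : ℂ) (r : ℝ)
    (hKr : K ⊆ Metric.closedBall p r) : ∃ Y : Set ℂ, IsCompact Y ∧ K ⊆ Y ∧ IsConnected Y ∧
      IsPreconnected Yᶜ ∧ frontier Y ⊆ K ∧ Y ⊆ Metric.closedBall p r ∧
      ∀ X : Set ℂ, K ⊆ X → ∀ y ∈ Y, y ∉ X → connectedComponentIn Xᶜ y ⊆ Y := by
  obtain ⟨k, hk⟩ := hKc.nonempty
  have hr : 0 ≤ r := dist_nonneg.trans (hKr hk)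
  have hout : IsPreconnected (Metric.closedBall p r)ᶜ :=
    compl_ball_preconn p r hr
  let q : ℂ := p + (r + 1 : ℝ)
  have hq : q ∈ (Metric.closedBall p r)ᶜ := by
    rw [mem_compl_iff, Metric.mem_closedBall, dist_eq_norm, add_sub_cancel_left,
      Complex.norm_real, Real.norm_of_nonneg (by linarith)]
    linarith
  let E := connectedComponentIn Kᶜ q
  have hqK : q ∈ Kᶜ := fun h => hq (hKr h)
  have hEo : IsOpen E := hK.isClosed.isOpen_compl.connectedComponentIn
  have hEb : (Metric.closedBall p r)ᶜ ⊆ E :=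
    hout.subset_connectedComponentIn hq (compl_subset_compl.2 hKr)
  have hYb : Eᶜ ⊆ Metric.closedBall p r := by
    rw [compl_subset_comm]; exact hEb
  have hYcl : IsClosed Eᶜ := hEo.isClosed_compl
  have hEK : E ⊆ Kᶜ := connectedComponentIn_subset _ _
  have hKY : K ⊆ Eᶜ := by rw [subset_compl_comm]; exact hEK
  have hfr : frontier Eᶜ ⊆ K := by
    rw [frontier_compl]; exact frontier_comp K hK.isClosed q
  have hqE : q ∈ E := mem_connectedComponentIn hqK
  have hcl : ∀ u v : Set ℂ, IsClosed u → IsClosed v → Eᶜ ⊆ u ∪ v → Eᶜ ∩ (u ∩ v) = ∅ →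
      K ⊆ u → Eᶜ ⊆ u := by
    intro u v hu hv huv hd hKu
    have hW : Eᶜ ∩ v = interior Eᶜ ∩ uᶜ := by
      apply Subset.antisymm
      · rintro x ⟨hx, hxv⟩
        have hxu : x ∉ u := fun h => by
          have : x ∈ Eᶜ ∩ (u ∩ v) := ⟨hx, h, hxv⟩
          rw [hd] at this; exact this
        refine ⟨?_, hxu⟩
        by_contra hxi
        exact hxu (hKu (hfr ⟨subset_closure hx, hxi⟩))
      · rintro x ⟨hx, hxu⟩
        exact ⟨interior_subset hx, (huv (interior_subset hx)).resolve_left hxu⟩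
    have hclopen : IsClopen (Eᶜ ∩ v) :=
      ⟨hYcl.inter hv, by rw [hW]; exact isOpen_interior.inter hu.isOpen_compl⟩
    rcases isClopen_iff.1 hclopen with h | h
    · intro x hx
      refine (huv hx).resolve_right fun hxv => ?_
      have : x ∈ Eᶜ ∩ v := ⟨hx, hxv⟩
      rw [h] at this; exact this
    · exfalso
      have : q ∈ Eᶜ ∩ v := by rw [h]; trivial
      exact this.1 hqE
  refine ⟨Eᶜ, (isCompact_closedBall p r).of_isClosed_subset hYcl hYb, hKY, ⟨⟨k, hKY hk⟩, ?_⟩,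
    ?_, hfr, hYb, ?_⟩
  · rw [isPreconnected_iff_subset_of_fully_disjoint_closed hYcl]
    intro u v hu hv huv hd
    have h2 := (isPreconnected_iff_subset_of_disjoint_closed.1 hKc.isPreconnected) u v hu hv
      (hKY.trans huv) (by rw [hd.inter_eq, inter_empty])
    rcases h2 with h2 | h2
    · exact Or.inl (hcl u v hu hv huv (by rw [hd.inter_eq, inter_empty]) h2)
    · exact Or.inr (hcl v u hv hu (by rwa [union_comm])
        (by rw [inter_comm v u, hd.inter_eq, inter_empty]) h2)
  · rw [compl_compl]; exact isPreconnected_connectedComponentIn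
  · intro X hKX y hy hyX z hz hzE
    have h1 : connectedComponentIn Xᶜ y ⊆ connectedComponentIn Kᶜ z :=
      isPreconnected_connectedComponentIn.subset_connectedComponentIn hz
        ((connectedComponentIn_subset _ _).trans (compl_subset_compl.2 hKX))
    have h2 : connectedComponentIn Kᶜ z = E := (connectedComponentIn_eq hzE).symm
    rw [h2] at h1
    exact hy (h1 (mem_connectedComponentIn hyX))

theorem core (X : Set ℂ) (hX : IsCompact X) (hlc : LocallyConnectedSpace ↥X)
    (h : HasWLPPP ↥X) : HasLFPP ↥X := by
  classical
  have : CompactSpace ↥X := isCompact_iff_compactSpace.1 hX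
  refine ⟨{B | IsOpen B ∧ HasFPP ↥(closure B)}, ?_, fun B hB => hB.2⟩
  refine TopologicalSpace.isTopologicalBasis_of_isOpen_of_nhds (fun B hB => hB.1) ?_
  intro a V ha hV
  obtain ⟨ε, hε, hhole⟩ := nsh X hX hlc h a
  obtain ⟨ε', hε', hV'⟩ := Metric.isOpen_iff.1 hV a ha
  obtain ⟨r, hr, hr1, hr2⟩ : ∃ r > 0, r < ε ∧ r < ε' := by
    refine ⟨min ε ε' / 2, by positivity, ?_, ?_⟩
    · linarith [min_le_left ε ε', lt_min hε hε']
    · linarith [min_le_right ε ε', lt_min hε hε']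
  obtain ⟨U, hUo, haU, hUc, hUr, hS⟩ := propS a hr
  have hUr2 : closure U ⊆ Metric.closedBall a r := closure_minimal hUr Metric.isClosed_closedBall
  obtain ⟨Y, hYc, hKY, hYconn, hYcc, hfr, hYr, hcomp⟩ := fill (Subtype.val '' closure U)
    (isClosed_closure.isCompact.image continuous_subtype_val)
    (IsConnected.image ⟨⟨a, subset_closure haU⟩, hUc.closure⟩ _ continuous_subtype_val.continuousOn)
    (a : ℂ) r (by rintro _ ⟨x, hx, rfl⟩; exact hUr2 hx)
  have hKX : Subtype.val '' closure U ⊆ X := by rintro _ ⟨x, -, rfl⟩; exact x.2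
  have hYX : Y ⊆ X := by
    intro y hy
    by_contra hyX
    refine hhole y hyX ((hcomp X hKX y hy hyX).trans (hYr.trans ?_))
    exact Metric.closedBall_subset_ball hr1
  have hKcl : IsClosed (Subtype.val '' closure U : Set ℂ) :=
    (isClosed_closure.isCompact.image continuous_subtype_val).isClosed
  let B : Set ↥X := U ∪ Subtype.val ⁻¹' (Y \ Subtype.val '' closure U)
  have hBo : IsOpen B := by
    refine hUo.union ?_
    have : Y \ Subtype.val '' closure U = interior Y \ Subtype.val '' closure U := by
      apply Subset.antisymm
      · rintro y ⟨hy, hyK⟩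
        refine ⟨?_, hyK⟩
        by_contra hyi
        exact hyK (hfr ⟨subset_closure hy, hyi⟩)
      · exact sdiff_subset_sdiff_left interior_subset
    rw [this]
    exact (isOpen_interior.sdiff hKcl).preimage continuous_subtype_val
  have hBY : B ⊆ Subtype.val ⁻¹' Y := by
    rintro x (hx | hx)
    · exact hKY ⟨x, subset_closure hx, rfl⟩
    · exact hx.1
  have hclB : closure B = Subtype.val ⁻¹' Y := by
    apply Subset.antisymm
    · exact closure_minimal hBY (hYc.isClosed.preimage continuous_subtype_val)
    · intro x hx
      by_cases hxK : (x : ℂ) ∈ Subtype.val '' closure U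
      · obtain ⟨x', hx', e⟩ := hxK
        rw [← Subtype.ext e]
        exact closure_mono subset_union_left hx'
      · exact subset_closure (Or.inr ⟨hx, hxK⟩)
  refine ⟨B, ⟨hBo, ?_⟩, Or.inl haU, ?_⟩
  · rw [hclB]
    intro f hf
    obtain ⟨y, hy, hfy⟩ := plane_fpp hYc hYconn hYcc hKY hfr (by
      intro η hη
      obtain ⟨δ, hδ, hM⟩ := hS η hη
      refine ⟨δ, hδ, ?_⟩
      rintro _ ⟨x, hx, rfl⟩ _ ⟨y, hy, rfl⟩ hxy
      obtain ⟨M, h1, h2, h3, h4, h5⟩ := hM x hx y hy hxy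
      refine ⟨Subtype.val '' M, image_mono h1, h2.image _ continuous_subtype_val.continuousOn,
        ⟨x, h3, rfl⟩, ⟨y, h4, rfl⟩, ?_⟩
      rintro _ ⟨z, hz, rfl⟩
      exact h5 z hz)
      (fun z => if h : z ∈ Y then ((f ⟨⟨z, hYX h⟩, h⟩ : ↥X) : ℂ) else 0)
      (by
        rw [continuousOn_iff_continuous_domRestrict]
        have : Continuous fun z : ↥Y => ((f ⟨⟨z, hYX z.2⟩, z.2⟩ : ↥X) : ℂ) := by
          refine continuous_subtype_val.comp (continuous_subtype_val.comp (hf.comp ?_))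
          exact Continuous.subtype_mk (Continuous.subtype_mk continuous_subtype_val _) _
        convert this using 1
        ext z
        simp only [domRestrict_apply, dif_pos z.2])
      (by
        intro z hz
        simp only [dif_pos hz]
        exact (f ⟨⟨z, hYX hz⟩, hz⟩).2)
    rw [dif_pos hy] at hfy
    exact ⟨⟨⟨y, hYX hy⟩, hy⟩, Subtype.ext (Subtype.ext hfy)⟩
  · intro x hx
    apply hV'
    have : dist (x : ℂ) a ≤ r := hYr (hBY hx)
    exact lt_of_le_of_lt this hr2

end LFP

namespace LFP
open Set Topology

theorem closure_homeo {Y Z : Type*} [TopologicalSpace Y] [TopologicalSpace Z] (e : Y ≃ₜ Z)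
    (B : Set Y) (h : HasFPP ↥(closure B)) : HasFPP ↥(closure (e '' B)) := by
  have e2 : ↥(closure B) ≃ₜ ↥(closure (e '' B)) :=
    (e.image (closure B)).trans (Homeomorph.setCongr (e.image_closure B))
  intro f hf
  obtain ⟨x, hx⟩ := h (e2.symm ∘ f ∘ e2) (e2.symm.continuous.comp (hf.comp e2.continuous))
  refine ⟨e2 x, ?_⟩
  have := congrArg e2 hx
  simpa using this

theorem basis_image {Y Z : Type*} [TopologicalSpace Y] [TopologicalSpace Z] (e : Y ≃ₜ Z)
    {𝓑 : Set (Set Y)} (h : TopologicalSpace.IsTopologicalBasis 𝓑) :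
    TopologicalSpace.IsTopologicalBasis ((fun B => e '' B) '' 𝓑) := by
  refine TopologicalSpace.isTopologicalBasis_of_isOpen_of_nhds ?_ ?_
  · rintro _ ⟨B, hB, rfl⟩
    exact e.isOpenMap _ (h.isOpen hB)
  · intro a V ha hV
    obtain ⟨B, hB, hb, hBV⟩ := h.exists_subset_of_mem_open
      (show e.symm a ∈ e ⁻¹' V by simpa using ha) (hV.preimage e.continuous)
    exact ⟨e '' B, ⟨B, hB, rfl⟩, ⟨_, hb, by simp⟩, image_subset_iff.2 hBV⟩

theorem lfpp_homeo {Y Z : Type*} [TopologicalSpace Y] [TopologicalSpace Z] (e : Y ≃ₜ Z)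
    (h : HasLFPP Y) : HasLFPP Z := by
  obtain ⟨𝓑, hb, hB⟩ := h
  refine ⟨_, basis_image e hb, ?_⟩
  rintro _ ⟨B, hB', rfl⟩
  exact closure_homeo e B (hB B hB')

theorem wlppp_homeo {Y Z : Type*} [TopologicalSpace Y] [TopologicalSpace Z] (e : Y ≃ₜ Z)
    (h : HasWLPPP Y) : HasWLPPP Z := by
  obtain ⟨𝓑, hb, hB⟩ := h
  refine ⟨_, basis_image e hb, ?_⟩
  rintro _ ⟨B, hB', rfl⟩ f hf hfB
  obtain ⟨x, hx, n, hn, hxn⟩ := hB B hB' (e.symm ∘ f ∘ e)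
    (e.symm.continuous.comp (hf.comp e.continuous)) (by
      rintro _ ⟨x, hx, rfl⟩
      have h1 : f (e x) ∈ e '' B := hfB ⟨e x, by rw [← e.image_closure]; exact ⟨x, hx, rfl⟩, rfl⟩
      obtain ⟨b, hb, hbe⟩ := h1
      simp [← hbe, hb])
  refine ⟨e x, ⟨x, hx, rfl⟩, n, hn, ?_⟩
  have hsc : Function.Semiconj e (e.symm ∘ f ∘ e) f := fun x => by simp
  have := (hsc.iterate_right n) x
  rw [hxn] at this
  exact this.symm

theorem plane_core (X : Set (EuclideanSpace ℝ (Fin 2))) (hX : IsCompact X)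
    (hlc : LocallyConnectedSpace ↥X) (h : HasWLPPP ↥X) : HasLFPP ↥X := by
  let E : EuclideanSpace ℝ (Fin 2) ≃ₜ ℂ :=
    Complex.orthonormalBasisOneI.repr.symm.toHomeomorph
  let e : ↥X ≃ₜ ↥(E '' X) := E.image X
  have hlc' : LocallyConnectedSpace ↥(E '' X) := e.symm.isOpenEmbedding.locallyConnectedSpace
  exact lfpp_homeo e.symm (core (E '' X) (hX.image E.continuous) hlc' (wlppp_homeo e h))

end LFP

/-- For a locally connected continuum in the plane, wLFPP, LFPP, wLPPP and LPPP are
mutually equivalent. -/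
theorem stmt_1 (X : Set (EuclideanSpace ℝ (Fin 2)))
    (hcomp : IsCompact X) (hconn : IsConnected X)
    (hlc : LocallyConnectedSpace ↥X) :
    List.TFAE [HasWLFPP ↥X, HasLFPP ↥X, HasWLPPP ↥X, HasLPPP ↥X] := by
  tfae_have 2 → 1 := by
    rintro ⟨𝓑, hb, hB⟩
    refine ⟨𝓑, hb, fun B hB' f hf hfB => ?_⟩
    obtain ⟨x, hx⟩ := hB B hB'
      (fun x => ⟨f x, subset_closure (hfB ⟨x, x.2, rfl⟩)⟩)
      ((hf.comp continuous_subtype_val).subtype_mk _)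
    have hx' : f x = x := congrArg Subtype.val hx
    refine ⟨x, ?_, hx'⟩
    rw [← hx']
    exact hfB ⟨x, x.2, rfl⟩
  tfae_have 2 → 4 := by
    rintro ⟨𝓑, hb, hB⟩
    refine ⟨𝓑, hb, fun B hB' f hf => ?_⟩
    obtain ⟨x, hx⟩ := hB B hB' f hf
    exact ⟨x, 1, le_rfl, hx⟩
  tfae_have 1 → 3 := by
    rintro ⟨𝓑, hb, hB⟩
    refine ⟨𝓑, hb, fun B hB' f hf hfB => ?_⟩
    obtain ⟨x, hxB, hx⟩ := hB B hB' f hf hfB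
    exact ⟨x, hxB, 1, le_rfl, hx⟩
  tfae_have 4 → 3 := by
    rintro ⟨𝓑, hb, hB⟩
    refine ⟨𝓑, hb, fun B hB' f hf hfB => ?_⟩
    let g : ↥(closure B) → ↥(closure B) := fun x => ⟨f x, subset_closure (hfB ⟨x, x.2, rfl⟩)⟩
    obtain ⟨x, n, hn, hx⟩ := hB B hB' g ((hf.comp continuous_subtype_val).subtype_mk _)
    have hsc : Function.Semiconj (Subtype.val : ↥(closure B) → ↥X) g f := fun x => rfl
    have h1 := (hsc.iterate_right n) x
    rw [hx] at h1
    refine ⟨x, ?_, n, hn, h1.symm⟩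
    obtain ⟨m, rfl⟩ : ∃ m, n = m + 1 := ⟨n - 1, by omega⟩
    rw [Function.iterate_succ_apply'] at hx
    rw [← hx]
    exact hfB ⟨_, (g^[m] x).2, rfl⟩
  tfae_have 3 → 2 := fun h => LFP.plane_core X hcomp hlc h
  tfae_finish
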